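/- arXiv:math/0608079 — 2 statements merged into one kernel-verified Lean document; each statement's English description precedes it below -/
import Mathlib

section
/- The K-linear map U_q^-(g) ⊗_K K[T] ⊗_K U_q^+(g) → B_θ(g), a ⊗ t ⊗ b ↦ F(a)·ι(t)·E(b), is bijective, where: K[T] is the Laurent polynomial algebra on the set of θ-orbits in I and ι sends the variable of the orbit of i to T_i; F: U_q^-(g) → B_θ(g) is the algebra homomorphism sending f_i to F_i; and E: U_q^+(g) → B_θ(g) is the algebra homomorphism sending e_i to E_i (here U_q^+(g) is the K-algebra generated by {e_i}_{i∈I} with the q-Serre relations). In particular B_θ(g) ≅ U_q^-(g) ⊗ K[T_i^{±1}; i∈I] ⊗ U_q^+(g) as a K-vector space. -/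
noncomputable section
open scoped BigOperators TensorProduct

abbrev KK : Type := RatFunc ℚ

def qq : KK := RatFunc.X

def qZ (n : ℤ) : KK := qq ^ n

def qInt (d : ℤ) (k : ℕ) : KK := (qq ^ (d * k) - qq ^ (-(d * k : ℤ))) / (qq ^ d - qq ^ (-d : ℤ))

def qFact (d : ℤ) (k : ℕ) : KK := ∏ m ∈ Finset.range k, qInt d (m + 1)

variable {I : Type} [DecidableEq I]

/-- `b = 1 - (α_i^∨, α_j)` -/
def serreN (A : I → I → ℤ) (i j : I) : ℕ := (1 - 2 * A i j / A i i).toNat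

/-- the `q`-Serre element `Σ_k (-1)^k x_i^{(k)} x_j x_i^{(b-k)}` attached to a family
`x : I → R` of elements of a `K`-algebra `R`. -/
def serreElt (A : I → I → ℤ) {R : Type} [Ring R] [Algebra KK R] (x : I → R) (i j : I) : R :=
  ∑ k ∈ Finset.range (serreN A i j + 1),
    ((-1 : KK) ^ k * (qFact (A i i / 2) k)⁻¹ * (qFact (A i i / 2) (serreN A i j - k))⁻¹) •
      (x i ^ k * x j * x i ^ (serreN A i j - k))

inductive SerreRel (A : I → I → ℤ) : FreeAlgebra KK I → FreeAlgebra KK I → Prop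
  | serre (i j : I) (h : i ≠ j) : SerreRel A (serreElt A (FreeAlgebra.ι KK) i j) 0

abbrev Um (A : I → I → ℤ) : Type := RingQuot (SerreRel A)

def fgen (A : I → I → ℤ) (i : I) : Um A := RingQuot.mkAlgHom KK (SerreRel A) (FreeAlgebra.ι KK i)

def fdiv (A : I → I → ℤ) (i : I) (n : ℕ) : Um A :=
  (qFact (A i i / 2) n)⁻¹ • (fgen A i) ^ n

def IsCartan (A : I → I → ℤ) : Prop :=
  (∀ i j, A i j = A j i) ∧ (∀ i, 0 < A i i) ∧ (∀ i, 2 ∣ A i i) ∧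
  (∀ i j, i ≠ j → A i j ≤ 0) ∧ (∀ i j, A i i ∣ 2 * A i j)

/-- `θ` is a Dynkin-diagram involution. -/
def IsTheta (A : I → I → ℤ) (θ : I → I) : Prop :=
  (∀ i, θ (θ i) = i) ∧ (∀ i j, A (θ i) (θ j) = A i j)

/-- generators of `B_θ(g)`: `E_i`, `F_i`, `T_i` and `T_i⁻¹`. -/
inductive BGen (I : Type) : Type
  | E : I → BGen I
  | F : I → BGen I
  | T : I → BGen I
  | Ti : I → BGen I

def bE (i : I) : FreeAlgebra KK (BGen I) := FreeAlgebra.ι KK (BGen.E i)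
def bF (i : I) : FreeAlgebra KK (BGen I) := FreeAlgebra.ι KK (BGen.F i)
def bT (i : I) : FreeAlgebra KK (BGen I) := FreeAlgebra.ι KK (BGen.T i)
def bTi (i : I) : FreeAlgebra KK (BGen I) := FreeAlgebra.ι KK (BGen.Ti i)

/-- the defining relations of `B_θ(g)`. -/
inductive BRel (A : I → I → ℤ) (θ : I → I) :
    FreeAlgebra KK (BGen I) → FreeAlgebra KK (BGen I) → Prop
  | T_inv_right (i : I) : BRel A θ (bT i * bTi i) 1
  | T_inv_left (i : I) : BRel A θ (bTi i * bT i) 1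
  | T_comm (i j : I) : BRel A θ (bT i * bT j) (bT j * bT i)
  | T_theta (i : I) : BRel A θ (bT (θ i)) (bT i)
  | Ti_theta (i : I) : BRel A θ (bTi (θ i)) (bTi i)
  | TE (i j : I) : BRel A θ (bT i * bE j) (qZ (A i j + A (θ i) j) • (bE j * bT i))
  | TF (i j : I) : BRel A θ (bT i * bF j) (qZ (-(A i j + A (θ i) j)) • (bF j * bT i))
  | EF (i j : I) : BRel A θ (bE i * bF j)
      (qZ (-(A i j)) • (bF j * bE i) + (if i = j then 1 else 0) +
        (if θ i = j then bT i else 0))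
  | Eserre (i j : I) (h : i ≠ j) : BRel A θ (serreElt A bE i j) 0
  | Fserre (i j : I) (h : i ≠ j) : BRel A θ (serreElt A bF i j) 0

abbrev Bth (A : I → I → ℤ) (θ : I → I) : Type := RingQuot (BRel A θ)

def Eg (A : I → I → ℤ) (θ : I → I) (i : I) : Bth A θ :=
  RingQuot.mkAlgHom KK (BRel A θ) (bE i)
def Fg (A : I → I → ℤ) (θ : I → I) (i : I) : Bth A θ :=
  RingQuot.mkAlgHom KK (BRel A θ) (bF i)
def Tg (A : I → I → ℤ) (θ : I → I) (i : I) : Bth A θ :=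
  RingQuot.mkAlgHom KK (BRel A θ) (bT i)
def Tig (A : I → I → ℤ) (θ : I → I) (i : I) : Bth A θ :=
  RingQuot.mkAlgHom KK (BRel A θ) (bTi i)

/-- a dominant integral `θ`-invariant weight `λ`, recorded through the pairings
`lam i = (α_i, λ)`. -/
def IsDomWt (A : I → I → ℤ) (θ : I → I) (lam : I → ℤ) : Prop :=
  (∀ i, 0 ≤ lam i) ∧ (∀ i, A i i ∣ 2 * lam i) ∧ (∀ i, lam (θ i) = lam i)

/-- the set of `θ`-orbits in `I`. -/
abbrev Orb (θ : I → I) : Type := Quot (fun i j : I => θ i = j)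


set_option linter.unusedSectionVars false

namespace BT

lemma qq_ne : qq ≠ 0 := RatFunc.X_ne_zero

lemma qq_pow_ne (m : ℕ) (hm : m ≠ 0) : qq ^ m ≠ 1 := by
  intro h
  have h1 : algebraMap (Polynomial ℚ) KK (Polynomial.X ^ m) = algebraMap (Polynomial ℚ) KK 1 := by
    rw [map_pow, map_one, RatFunc.algebraMap_X]; exact h
  have h2 := RatFunc.algebraMap_injective ℚ h1
  have h3 := congrArg Polynomial.natDegree h2
  simp at h3
  exact hm h3

lemma qq_zpow_ne (m : ℤ) (hm : m ≠ 0) : qq ^ m ≠ 1 := by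
  intro h
  rcases Int.natAbs_eq m with h1 | h1
  · rw [h1, zpow_natCast] at h
    exact qq_pow_ne _ (by omega) h
  · rw [h1, zpow_neg, zpow_natCast, inv_eq_one] at h
    exact qq_pow_ne _ (by omega) h

lemma qq_zpow_sub_ne (m : ℤ) (hm : m ≠ 0) : qq ^ m - qq ^ (-m) ≠ 0 := by
  intro h
  have h1 := sub_eq_zero.mp h
  have : qq ^ (m + m) = 1 := by
    rw [zpow_add₀ qq_ne]; nth_rewrite 1 [h1]
    rw [← zpow_add₀ qq_ne]; simp
  exact qq_zpow_ne _ (by omega) this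

lemma qInt_ne (d : ℤ) (hd : 0 < d) (k : ℕ) : qInt d (k + 1) ≠ 0 := by
  unfold qInt
  refine div_ne_zero (qq_zpow_sub_ne _ ?_) (qq_zpow_sub_ne _ hd.ne')
  push_cast; positivity

lemma qInt_mul (d : ℤ) (hd : 0 < d) (k : ℕ) :
    qInt d k * (qq ^ d - qq ^ (-d)) = qq ^ (d * k) - qq ^ (-(d * k : ℤ)) := by
  unfold qInt
  exact div_mul_cancel₀ _ (qq_zpow_sub_ne _ hd.ne')

lemma qFact_ne (d : ℤ) (hd : 0 < d) (k : ℕ) : qFact d k ≠ 0 := by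
  unfold qFact
  exact Finset.prod_ne_zero_iff.mpr fun m _ => qInt_ne d hd m

lemma qFact_succ (d : ℤ) (k : ℕ) : qFact d (k + 1) = qFact d k * qInt d (k + 1) := by
  unfold qFact; rw [Finset.prod_range_succ]

lemma qInt_zero (d : ℤ) : qInt d 0 = 0 := by simp [qInt]

/-- `[n+1] q^{-n} = q^{-2} [n] q^{1-n} + 1`. -/
lemma qInt_rec1 (d : ℤ) (hd : 0 < d) (n : ℕ) :
    qq ^ (-(d * n)) * qInt d (n + 1) = qq ^ (-(2 * d)) * (qq ^ (d - d * n) * qInt d n) + 1 := by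
  have h := qq_zpow_sub_ne d hd.ne'
  refine mul_right_cancel₀ h ?_
  rw [add_mul, mul_assoc, qInt_mul d hd, mul_assoc, mul_assoc, qInt_mul d hd, one_mul]
  simp only [mul_sub, ← zpow_add₀ qq_ne]
  push_cast
  ring_nf

lemma qInt_split (d : ℤ) (hd : 0 < d) (k l : ℕ) :
    qInt d (k + l) = qq ^ (d * k) * qInt d l + qq ^ (-(d * l)) * qInt d k := by
  have h := qq_zpow_sub_ne d hd.ne'
  refine mul_right_cancel₀ h ?_
  rw [add_mul, mul_assoc, mul_assoc, qInt_mul d hd, qInt_mul d hd, qInt_mul d hd]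
  simp only [mul_sub, ← zpow_add₀ qq_ne]
  push_cast
  ring_nf

/-- coefficient of the Serre element -/
def sc (d : ℤ) (b k : ℕ) : KK := (-1 : KK) ^ k * (qFact d k)⁻¹ * (qFact d (b - k))⁻¹

lemma sc_partial (d : ℤ) (hd : 0 < d) (n m : ℕ) (hm : m ≤ n) :
    qInt d (n + 1) * ∑ k ∈ Finset.range (m + 1), sc d (n + 1) k * qq ^ (d * n * k) =
      sc d n m * qq ^ (d * (n + 1) * m) := by
  induction m with
  | zero =>
    simp only [zero_add, Finset.sum_range_one, sc]
    have h1 := qFact_ne d hd n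
    have h2 := qInt_ne d hd n
    simp only [Nat.sub_zero, qFact_succ]
    field_simp
    simp
  | succ m ih =>
    rw [Finset.sum_range_succ, mul_add, ih (by omega)]
    obtain ⟨l, rfl⟩ : ∃ l, n = m + 1 + l := ⟨n - (m + 1), by omega⟩
    have e1 : m + 1 + l + 1 - (m + 1) = l + 1 := by omega
    have e2 : m + 1 + l - m = l + 1 := by omega
    have e3 : m + 1 + l - (m + 1) = l := by omega
    have h := qInt_split d hd (m + 1) (l + 1)
    have h' : qInt d (m + 1 + l + 1) = _ := h
    rw [h']
    simp only [sc, e1, e2, e3, qFact_succ, pow_succ]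
    have h1 := qFact_ne d hd m
    have h2 := qInt_ne d hd m
    have h3 := qFact_ne d hd l
    have h4 := qInt_ne d hd l
    have z1 : qq ^ (d * ((m + 1 + l : ℕ) + 1) * ((m + 1 : ℕ) : ℤ)) =
      qq ^ (d * ((m + 1 + l : ℕ) : ℤ) * ((m + 1 : ℕ) : ℤ)) * qq ^ (d * ((m + 1 : ℕ) : ℤ)) := by
      rw [← zpow_add₀ qq_ne]; ring_nf
    have z2 : qq ^ (d * ((m + 1 + l : ℕ) + 1) * (m : ℤ)) =
      qq ^ (d * ((m + 1 + l : ℕ) : ℤ) * ((m + 1 : ℕ) : ℤ)) * qq ^ (-(d * ((l + 1 : ℕ) : ℤ))) := by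
      rw [← zpow_add₀ qq_ne]; push_cast; ring_nf
    rw [z1, z2]
    generalize qq ^ (d * ((m + 1 + l : ℕ) : ℤ) * ((m + 1 : ℕ) : ℤ)) = z
    generalize qq ^ (-(d * ((l + 1 : ℕ) : ℤ))) = w
    generalize qq ^ (d * ((m + 1 : ℕ) : ℤ)) = w'
    field_simp
    ring

lemma sc_sum (d : ℤ) (hd : 0 < d) (n : ℕ) :
    ∑ k ∈ Finset.range (n + 1 + 1), sc d (n + 1) k * qq ^ (d * n * k) = 0 := by
  have h := sc_partial d hd n n le_rfl
  refine (mul_eq_zero.mp ?_).resolve_left (qInt_ne d hd n)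
  rw [Finset.sum_range_succ, mul_add, h]
  have h1 := qFact_ne d hd n
  have h2 := qInt_ne d hd n
  simp only [sc, Nat.sub_self, qFact_succ, pow_succ]
  have : (d * (n + 1) * n : ℤ) = d * n * (n + 1 : ℕ) := by push_cast; ring
  rw [this]
  field_simp
  ring

lemma sc_sum' (d : ℤ) (hd : 0 < d) (n : ℕ) :
    ∑ k ∈ Finset.range (n + 1 + 1), sc d (n + 1) k * qq ^ (d * n * ((n + 1 - k : ℕ) : ℤ)) = 0 := by
  have h := sc_sum d hd n
  rw [← Finset.sum_range_reflect] at h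
  have h2 : ∑ k ∈ Finset.range (n + 1 + 1), sc d (n + 1) k * qq ^ (d * n * ((n + 1 - k : ℕ) : ℤ))
    = (-1) ^ (n + 1) * ∑ j ∈ Finset.range (n + 1 + 1), sc d (n + 1) (n + 1 + 1 - 1 - j) *
      qq ^ (d * n * ((n + 1 + 1 - 1 - j : ℕ) : ℤ)) := by
    rw [Finset.mul_sum]
    refine Finset.sum_congr rfl fun k hk => ?_
    have hk : k ≤ n + 1 := by simpa [Nat.lt_succ_iff] using hk
    obtain ⟨l, hl⟩ := Nat.exists_eq_add_of_le hk
    simp only [hl, sc]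
    have e1 : k + l + 1 - 1 - k = l := by omega
    have e2 : k + l - l = k := by omega
    have e3 : k + l - k = l := by omega
    rw [e1, e2, e3]
    have : ((-1 : KK) ^ (k + l)) * (-1) ^ l = (-1) ^ k := by
      rw [pow_add, mul_assoc, ← mul_pow]; simp
    rw [← this]; ring
  rw [h2, h, mul_zero]

end BT

namespace BT

lemma qzp (a : ℤ) (n : ℕ) : (qq ^ a) ^ n = qq ^ (a * n) := by
  rw [← zpow_natCast, ← zpow_mul]

section master
variable {R : Type} [Ring R] [Algebra KK R]

/-- top-right entry of the `n`-th power of `!![p x, u; 0, x]` -/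
def dN (p : KK) (x u : R) : ℕ → R
  | 0 => 0
  | n + 1 => p • (x * dN p x u n) + u * x ^ n

/-- top right entry of `X^k Y X^l` -/
def tN (p r : KK) (x y u v : R) (k l : ℕ) : R :=
  (p ^ k * r) • (x ^ k * y * dN p x u l) + (p ^ k • (x ^ k * v) + dN p x u k * y) * x ^ l

def TR (c : ℕ → KK) (b : ℕ) (p r : KK) (x y u v : R) : R :=
  ∑ k ∈ Finset.range (b + 1), c k • tN p r x y u v k (b - k)

lemma dN_zero (p : KK) (x : R) (n : ℕ) : dN p x 0 n = 0 := by
  induction n with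
  | zero => rfl
  | succ n ih => simp [dN, ih]

lemma dN_add (p : KK) (x u u' : R) (n : ℕ) : dN p x (u + u') n = dN p x u n + dN p x u' n := by
  induction n with
  | zero => simp [dN]
  | succ n ih => simp only [dN, ih, mul_add, add_mul, smul_add]; abel

lemma tN_add (p r : KK) (x y u v u' v' : R) (k l : ℕ) :
    tN p r x y (u + u') (v + v') k l = tN p r x y u v k l + tN p r x y u' v' k l := by
  simp only [tN, dN_add, mul_add, add_mul, smul_add]; abel

lemma TR_add (c : ℕ → KK) (b : ℕ) (p r : KK) (x y u v u' v' : R) :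
    TR c b p r x y (u + u') (v + v') = TR c b p r x y u v + TR c b p r x y u' v' := by
  simp only [TR, tN_add, smul_add, Finset.sum_add_distrib]

lemma TR_zero (c : ℕ → KK) (b : ℕ) (p r : KK) (x y : R) : TR c b p r x y 0 0 = 0 := by
  simp [TR, tN, dN_zero]

lemma comm_pow (T x : R) (s : KK) (h : T * x = s • (x * T)) (n : ℕ) :
    T * x ^ n = s ^ n • (x ^ n * T) := by
  induction n with
  | zero => simp
  | succ n ih =>
    rw [pow_succ, ← mul_assoc, ih, smul_mul_assoc, mul_assoc, h, mul_smul_comm, smul_smul,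
      pow_succ, mul_assoc]

lemma dN_eq (p s : KK) (x T : R) (h : T * x = s • (x * T)) (g : ℕ → KK) (hg0 : g 0 = 0)
    (hg : ∀ n, g (n + 1) = p * g n + s ^ n) (n : ℕ) :
    dN p x T (n + 1) = g (n + 1) • (x ^ n * T) := by
  induction n with
  | zero => simp [dN, hg, hg0]
  | succ n ih =>
    rw [dN, ih, comm_pow T x s h, hg (n + 1), add_smul, mul_smul_comm, smul_smul, pow_succ' x n,
      mul_assoc]

lemma TR_u (c : ℕ → KK) (b : ℕ) (p r s s' : KK) (x y T : R) (hx : T * x = s • (x * T))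
    (hy : T * y = s' • (y * T)) (g : ℕ → KK) (hg0 : g 0 = 0)
    (hg : ∀ n, g (n + 1) = p * g n + s ^ n)
    (hc : ∀ k l, k + l + 1 = b →
      c (k + 1) * (g (k + 1) * (s' * s ^ l)) + c k * (p ^ k * r * g (l + 1)) = 0) :
    TR c b p r x y T 0 = 0 := by
  have h1 : ∀ k, c k • tN p r x y T 0 k (b - k) =
      c k • ((p ^ k * r) • (x ^ k * y * dN p x T (b - k))) +
      c k • (dN p x T k * y * x ^ (b - k)) := by
    intro k; simp [tN]
  simp only [TR, h1, Finset.sum_add_distrib]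
  rw [Finset.sum_range_succ, Finset.sum_range_succ']
  simp only [Nat.sub_self, dN, mul_zero, smul_zero, zero_mul, add_zero]
  rw [← Finset.sum_add_distrib]
  refine Finset.sum_eq_zero fun k hk => ?_
  obtain ⟨l, rfl⟩ : ∃ l, b = k + l + 1 := ⟨b - (k + 1), by have := Finset.mem_range.mp hk; omega⟩
  have e1 : k + l + 1 - k = l + 1 := by omega
  have e2 : k + l + 1 - (k + 1) = l := by omega
  have h2 := dN_eq p s x T hx g hg0 hg
  have e3 := h2 k
  rw [dN] at e3
  rw [e1, e2, h2, e3]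
  have h3 : T * y * x ^ l = (s' * s ^ l) • (y * x ^ l * T) := by
    rw [hy, smul_mul_assoc, mul_assoc, comm_pow T x s hx, mul_smul_comm, smul_smul, mul_assoc]
  have h4 : g (k + 1) • (x ^ k * T) * y * x ^ l =
      (g (k + 1) * (s' * s ^ l)) • (x ^ k * y * x ^ l * T) := by
    rw [smul_mul_assoc, smul_mul_assoc, mul_assoc, mul_assoc, ← mul_assoc T, h3, mul_smul_comm,
      smul_smul]; simp only [mul_assoc]
  have h5 : x ^ k * y * (x ^ l * T) = x ^ k * y * x ^ l * T := (mul_assoc _ _ _).symm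
  rw [h4, mul_smul_comm, smul_smul, smul_smul, smul_smul, h5, ← add_smul]
  have := hc k l rfl
  rw [mul_assoc (c k), show c k * (p ^ k * r * g (l + 1)) + c (k + 1) * (g (k + 1) * (s' * s ^ l)) = 0 by
    rw [add_comm]; exact this, zero_smul]

lemma TR_v (c : ℕ → KK) (b : ℕ) (p r s : KK) (x y T : R) (hx : T * x = s • (x * T))
    (hc : ∑ k ∈ Finset.range (b + 1), c k * (p ^ k * s ^ (b - k)) = 0) :
    TR c b p r x y 0 T = 0 := by
  have h1 : ∀ k ∈ Finset.range (b + 1), c k • tN p r x y 0 T k (b - k) =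
      (c k * (p ^ k * s ^ (b - k))) • (x ^ b * T) := by
    intro k hk
    have hk' : k + (b - k) = b := by have := Finset.mem_range.mp hk; omega
    simp only [tN, dN_zero, mul_zero, smul_zero, zero_mul, zero_add, add_zero]
    rw [smul_mul_assoc, mul_assoc, comm_pow T x s hx, mul_smul_comm, ← mul_assoc, ← pow_add, hk',
      smul_smul, smul_smul, mul_assoc]
  rw [TR, Finset.sum_congr rfl h1, ← Finset.sum_smul, hc, zero_smul]

lemma mat_pow (p : KK) (x u : R) (n : ℕ) :
    (!![p • x, u; 0, x] : Matrix (Fin 2) (Fin 2) R) ^ n =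
      !![p ^ n • x ^ n, dN p x u n; 0, x ^ n] := by
  induction n with
  | zero => simp [dN, Matrix.one_fin_two]
  | succ n ih =>
    rw [pow_succ', ih, Matrix.mul_fin_two]
    simp only [dN, pow_succ' x, pow_succ' p]
    simp [smul_smul, mul_comm]

lemma mat_tN (p r : KK) (x y u v : R) (k l : ℕ) :
    (!![p • x, u; 0, x] : Matrix (Fin 2) (Fin 2) R) ^ k * !![r • y, v; 0, y] *
      !![p • x, u; 0, x] ^ l =
      !![(p ^ (k + l) * r) • (x ^ k * y * x ^ l), tN p r x y u v k l; 0, x ^ k * y * x ^ l] := by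
  rw [mat_pow, mat_pow, Matrix.mul_fin_two, Matrix.mul_fin_two]
  simp [tN, smul_smul, pow_add]
  constructor
  · congr 1; ring
  · rw [mul_comm]

/-- the four base cases, for scalar coefficients -/
lemma TR_u1 (d : ℤ) (hd : 0 < d) (n : ℕ) (x y : R) :
    TR (sc d (n + 1)) (n + 1) (qZ (-(2 * d))) (qZ (d * n)) x y 1 0 = 0 := by
  refine TR_u _ _ _ _ 1 1 x y 1 (by simp) (by simp) (fun m => qq ^ (d - d * m) * qInt d m)
    (by simp [qInt_zero]) ?_ ?_
  · intro m
    have := qInt_rec1 d hd m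
    simp only [qZ, one_pow]
    rw [← this]; congr 2; push_cast; ring
  · intro k l hkl
    obtain rfl : n = k + l := by omega
    have e1 : k + l + 1 - (k + 1) = l := by omega
    have e2 : k + l + 1 - k = l + 1 := by omega
    simp only [sc, e1, e2, qFact_succ, qZ, one_pow, mul_one, pow_succ]
    have h1 := qFact_ne d hd k
    have h2 := qInt_ne d hd k
    have h3 := qFact_ne d hd l
    have h4 := qInt_ne d hd l
    have z : (qq ^ (-(2 * d))) ^ k * qq ^ (d * ((k + l : ℕ) : ℤ)) * qq ^ (d - d * ((l + 1 : ℕ) : ℤ))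
      = qq ^ (d - d * ((k + 1 : ℕ) : ℤ)) := by
      rw [← zpow_natCast, ← zpow_mul, ← zpow_add₀ qq_ne, ← zpow_add₀ qq_ne]
      congr 1; push_cast; ring
    rw [← mul_assoc _ _ (qInt d (l + 1)), z]
    generalize qq ^ (d - d * ((k + 1 : ℕ) : ℤ)) = w
    field_simp
    ring

lemma TR_uT (d : ℤ) (hd : 0 < d) (n : ℕ) (α β : ℤ) (x y T : R)
    (hx : T * x = qZ (α - 2 * d) • (x * T)) (hy : T * y = qZ (β + d * n) • (y * T)) :
    TR (sc d (n + 1)) (n + 1) (qZ α) (qZ β) x y T 0 = 0 := by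
  refine TR_u _ _ _ _ _ _ x y T hx hy (fun m => qq ^ (α * m - α) * (qq ^ (d - d * m) * qInt d m))
    (by simp [qInt_zero]) ?_ ?_
  · intro m
    have h := qInt_rec1 d hd m
    have h' : qq ^ (d - d * ((m + 1 : ℕ) : ℤ)) * qInt d (m + 1) =
      qq ^ (-(2 * d)) * (qq ^ (d - d * m) * qInt d m) + 1 := by
      rw [← h]; congr 2; push_cast; ring
    have h2 : qq ^ (-(d * m)) * qInt d (m + 1) = (qq ^ (d - d * m) * qInt d m)
       + qq ^ (-(2 * d * m)) := by
      have h := qq_zpow_sub_ne d hd.ne'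
      refine mul_right_cancel₀ h ?_
      rw [add_mul, mul_assoc, mul_assoc, qInt_mul d hd, qInt_mul d hd]
      simp only [mul_sub, ← zpow_add₀ qq_ne]
      push_cast
      ring_nf
    have h3 : qq ^ (d - d * ((m + 1 : ℕ) : ℤ)) = qq ^ (-(d * m)) := by
      congr 1; push_cast; ring
    simp only [qZ]
    rw [h3, h2, ← zpow_natCast (qq ^ _), ← zpow_mul, ← mul_assoc (qq ^ α), ← zpow_add₀ qq_ne,
      mul_add, ← zpow_add₀ qq_ne]
    congr 2
    · push_cast; ring_nf
    · push_cast; ring_nf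
  · intro k l hkl
    obtain rfl : n = k + l := by omega
    have e1 : k + l + 1 - (k + 1) = l := by omega
    have e2 : k + l + 1 - k = l + 1 := by omega
    simp only [sc, e1, e2, qFact_succ, qZ, pow_succ]
    have h1 := qFact_ne d hd k
    have h2 := qInt_ne d hd k
    have h3 := qFact_ne d hd l
    have h4 := qInt_ne d hd l
    have z : (qq ^ α) ^ k * qq ^ β * (qq ^ (α * ((l + 1 : ℕ) : ℤ) - α) *
        qq ^ (d - d * ((l + 1 : ℕ) : ℤ)))
      = qq ^ (α * ((k + 1 : ℕ) : ℤ) - α) * qq ^ (d - d * ((k + 1 : ℕ) : ℤ)) *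
        (qq ^ (β + d * ((k + l : ℕ) : ℤ)) * (qq ^ (α - 2 * d)) ^ l) := by
      simp only [qzp, ← zpow_add₀ qq_ne]
      congr 1; push_cast; ring
    rw [← mul_assoc _ _ (qInt d (l + 1)), ← mul_assoc _ _ (qInt d (l + 1)), z]
    generalize qq ^ (β + d * ((k + l : ℕ) : ℤ)) * (qq ^ (α - 2 * d)) ^ l = w
    generalize qq ^ (α * ((k + 1 : ℕ) : ℤ) - α) = w2
    generalize qq ^ (d - d * ((k + 1 : ℕ) : ℤ)) = w3
    field_simp
    ring

lemma TR_v1 (d : ℤ) (hd : 0 < d) (n : ℕ) (r : KK) (x y : R) :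
    TR (sc d (n + 1)) (n + 1) (qZ (d * n)) r x y 0 1 = 0 := by
  refine TR_v _ _ _ _ 1 x y 1 (by simp) ?_
  rw [← sc_sum d hd n]
  refine Finset.sum_congr rfl fun k _ => ?_
  rw [one_pow, mul_one, qZ, ← zpow_natCast, ← zpow_mul]

lemma TR_vT (d : ℤ) (hd : 0 < d) (n : ℕ) (α : ℤ) (r : KK) (x y T : R)
    (hx : T * x = qZ (α + d * n) • (x * T)) :
    TR (sc d (n + 1)) (n + 1) (qZ α) r x y 0 T = 0 := by
  refine TR_v _ _ _ _ _ x y T hx ?_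
  have : ∑ k ∈ Finset.range (n + 1 + 1), sc d (n + 1) k * (qZ α ^ k * qZ (α + d * n) ^ (n + 1 - k))
     = qZ α ^ (n + 1) * ∑ k ∈ Finset.range (n + 1 + 1), sc d (n + 1) k *
        qq ^ (d * n * ((n + 1 - k : ℕ) : ℤ)) := by
    rw [Finset.mul_sum]
    refine Finset.sum_congr rfl fun k hk => ?_
    have hk : k ≤ n + 1 := by simpa [Nat.lt_succ_iff] using hk
    obtain ⟨l, hl⟩ := Nat.exists_eq_add_of_le hk
    have e3 : k + l - k = l := by omega
    have e4 : (n : ℤ) + 1 = k + l := by exact_mod_cast hl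
    have hz : qZ α ^ k * qZ (α + d * n) ^ (n + 1 - k) = qZ α ^ (n + 1) *
        qq ^ (d * n * ((n + 1 - k : ℕ) : ℤ)) := by
      rw [hl, e3]
      simp only [qZ, qzp, ← zpow_add₀ qq_ne]
      congr 1; push_cast; ring
    rw [hz]; ring
  rw [this, sc_sum' d hd n, mul_zero]

lemma cartan_data {A : I → I → ℤ} (hA : IsCartan A) (i j : I) (h : i ≠ j) :
    ∃ (d : ℤ) (n : ℕ), 0 < d ∧ A i i / 2 = d ∧ A i i = 2 * d ∧ serreN A i j = n + 1 ∧
      A i j = - (d * n) ∧ A j i = -(d * n) := by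
  obtain ⟨hs, hp, h2, hn, hdv⟩ := hA
  obtain ⟨d, hd⟩ := h2 i
  obtain ⟨m, hm⟩ := hdv i j
  have hpi := hp i
  have hij := hn i j h
  have hd0 : 0 < d := by omega
  have hm0 : m ≤ 0 := by
    by_contra hc
    have : 0 < A i i * m := mul_pos hpi (by omega)
    omega
  refine ⟨d, (-m).toNat, hd0, by omega, hd, ?_, ?_, ?_⟩
  · unfold serreN
    rw [hm, Int.mul_ediv_cancel_left _ hpi.ne']
    omega
  · rw [Int.toNat_of_nonneg (by omega)]
    rw [hd] at hm; linarith
  · rw [Int.toNat_of_nonneg (by omega), hs j i]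
    rw [hd] at hm; linarith

def uu (θ : I → I) (k : I) (T : R) (l : I) : R :=
  (if k = l then 1 else 0) + (if θ k = l then T else 0)

def XX (A : I → I → ℤ) (θ : I → I) (k : I) (T : R) (x : I → R) (l : I) :
    Matrix (Fin 2) (Fin 2) R :=
  !![qZ (-(A k l)) • x l, uu θ k T l; 0, x l]

lemma mat_sum {ι : Type} (s : Finset ι) (a b c e : ι → R) :
    ∑ k ∈ s, (!![a k, b k; c k, e k] : Matrix (Fin 2) (Fin 2) R) =
      !![∑ k ∈ s, a k, ∑ k ∈ s, b k; ∑ k ∈ s, c k, ∑ k ∈ s, e k] := by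
  ext i j
  fin_cases i <;> fin_cases j <;> simp [Matrix.sum_apply]

theorem TR_main (A : I → I → ℤ) (θ : I → I) (hA : IsCartan A) (k : I) (T : R)
    (x : I → R) (hT : ∀ l, T * x l = qZ (-(A k l + A (θ k) l)) • (x l * T)) (i j : I)
    (h : i ≠ j) :
    TR (sc (A i i / 2) (serreN A i j)) (serreN A i j) (qZ (-(A k i))) (qZ (-(A k j)))
      (x i) (x j) (uu θ k T i) (uu θ k T j) = 0 := by
  obtain ⟨d, n, hd, h1, h2, h3, h4, h5⟩ := cartan_data hA i j h
  rw [h1, h3]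
  have key : ∀ u u' v v' : R, TR (sc d (n + 1)) (n + 1) (qZ (-(A k i))) (qZ (-(A k j)))
      (x i) (x j) (u + u') (v + v') =
      TR (sc d (n + 1)) (n + 1) (qZ (-(A k i))) (qZ (-(A k j))) (x i) (x j) u 0 +
      TR (sc d (n + 1)) (n + 1) (qZ (-(A k i))) (qZ (-(A k j))) (x i) (x j) 0 v +
      TR (sc d (n + 1)) (n + 1) (qZ (-(A k i))) (qZ (-(A k j))) (x i) (x j) u' 0 +
      TR (sc d (n + 1)) (n + 1) (qZ (-(A k i))) (qZ (-(A k j))) (x i) (x j) 0 v' := by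
    intro u u' v v'
    have s : ∀ u v : R, TR (sc d (n + 1)) (n + 1) (qZ (-(A k i))) (qZ (-(A k j)))
        (x i) (x j) u v =
        TR (sc d (n + 1)) (n + 1) (qZ (-(A k i))) (qZ (-(A k j))) (x i) (x j) u 0 +
        TR (sc d (n + 1)) (n + 1) (qZ (-(A k i))) (qZ (-(A k j))) (x i) (x j) 0 v := by
      intro u v
      rw [← TR_add, add_zero, zero_add]
    rw [TR_add, s u v, s u' v']; abel
  rw [uu, uu, key]
  have a1 : TR (sc d (n + 1)) (n + 1) (qZ (-(A k i))) (qZ (-(A k j))) (x i) (x j)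
      (if k = i then 1 else 0) 0 = 0 := by
    split_ifs with hk
    · subst hk
      rw [h2, h4, neg_neg]; exact TR_u1 d hd n _ _
    · exact TR_zero _ _ _ _ _ _
  have a2 : TR (sc d (n + 1)) (n + 1) (qZ (-(A k i))) (qZ (-(A k j))) (x i) (x j)
      0 (if k = j then 1 else 0) = 0 := by
    split_ifs with hk
    · subst hk
      rw [h5, neg_neg]; exact TR_v1 d hd n _ _ _
    · exact TR_zero _ _ _ _ _ _
  have a3 : TR (sc d (n + 1)) (n + 1) (qZ (-(A k i))) (qZ (-(A k j))) (x i) (x j)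
      (if θ k = i then T else 0) 0 = 0 := by
    split_ifs with hk
    · refine TR_uT d hd n _ _ _ _ _ ?_ ?_
      · rw [hT, hk, h2]; congr 2; ring
      · rw [hT, hk, h4]; congr 2; ring
    · exact TR_zero _ _ _ _ _ _
  have a4 : TR (sc d (n + 1)) (n + 1) (qZ (-(A k i))) (qZ (-(A k j))) (x i) (x j)
      0 (if θ k = j then T else 0) = 0 := by
    split_ifs with hk
    · refine TR_vT d hd n _ _ _ _ _ ?_
      · rw [hT, hk, h5]; congr 2; ring
    · exact TR_zero _ _ _ _ _ _
  rw [a1, a2, a3, a4]; simp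

theorem master (A : I → I → ℤ) (θ : I → I) (hA : IsCartan A) (k : I) (T : R)
    (x : I → R) (hT : ∀ l, T * x l = qZ (-(A k l + A (θ k) l)) • (x l * T)) (i j : I)
    (h : i ≠ j) :
    ∃ z : KK, serreElt A (XX A θ k T x) i j =
      !![z • serreElt A x i j, 0; 0, serreElt A x i j] := by
  refine ⟨qZ (-(A k i)) ^ (serreN A i j) * qZ (-(A k j)), ?_⟩
  have h0 := TR_main A θ hA k T x hT i j h
  rw [TR] at h0
  have h1 : serreElt A (XX A θ k T x) i j = ∑ m ∈ Finset.range (serreN A i j + 1),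
      !![(qZ (-(A k i)) ^ (serreN A i j) * qZ (-(A k j))) • (sc (A i i / 2) (serreN A i j) m •
          (x i ^ m * x j * x i ^ (serreN A i j - m))),
        sc (A i i / 2) (serreN A i j) m • tN (qZ (-(A k i))) (qZ (-(A k j))) (x i) (x j)
          (uu θ k T i) (uu θ k T j) m (serreN A i j - m);
        0, sc (A i i / 2) (serreN A i j) m • (x i ^ m * x j * x i ^ (serreN A i j - m))] := by
    unfold serreElt
    refine Finset.sum_congr rfl fun m hm => ?_
    have hm' : m + (serreN A i j - m) = serreN A i j := by
      have := Finset.mem_range.mp hm; omega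
    unfold XX
    rw [mat_tN, hm']
    ext a b
    fin_cases a <;> fin_cases b <;> simp [sc, smul_smul, mul_comm]
  rw [h1, mat_sum, h0, ← Finset.smul_sum, Finset.sum_const_zero]
  rfl

end master
end BT

namespace BT
section comm
variable {R : Type} [Ring R] [Algebra KK R]

lemma serre_map {S : Type} [Ring S] [Algebra KK S] (A : I → I → ℤ) (f : R →ₐ[KK] S) (x : I → R)
    (i j : I) : serreElt A (fun l => f (x l)) i j = f (serreElt A x i j) := by
  simp [serreElt, map_sum]

lemma serre_scale (A : I → I → ℤ) (c : I → KK) (x : I → R) (i j : I) :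
    serreElt A (fun l => c l • x l) i j = (c i ^ serreN A i j * c j) • serreElt A x i j := by
  unfold serreElt
  rw [Finset.smul_sum]
  refine Finset.sum_congr rfl fun k hk => ?_
  have hk' : k + (serreN A i j - k) = serreN A i j := by have := Finset.mem_range.mp hk; omega
  have hc : c i ^ serreN A i j = c i ^ k * c i ^ (serreN A i j - k) := by rw [← pow_add, hk']
  rw [hc]
  simp only [smul_pow, smul_mul_assoc, mul_smul_comm, smul_smul]
  congr 1; ring

lemma serre_op (A : I → I → ℤ) (x : I → R) (i j : I) :
    serreElt A (fun l => MulOpposite.op (x l)) i j =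
      (-1 : KK) ^ serreN A i j • MulOpposite.op (serreElt A x i j) := by
  unfold serreElt
  rw [← Finset.sum_range_reflect, Finset.op_sum, Finset.smul_sum]
  refine Finset.sum_congr rfl fun k hk => ?_
  have hk' : k ≤ serreN A i j := by have := Finset.mem_range.mp hk; omega
  obtain ⟨l, hl⟩ := Nat.exists_eq_add_of_le hk'
  rw [hl]
  have e1 : k + l + 1 - 1 - k = l := by omega
  have e2 : k + l - l = k := by omega
  have e3 : k + l - k = l := by omega
  rw [e1, e2, e3]
  simp only [← MulOpposite.op_pow, ← MulOpposite.op_mul, ← MulOpposite.op_smul, smul_smul]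
  have : ((-1 : KK) ^ (k + l)) * (-1) ^ k = (-1) ^ l := by
    rw [add_comm, pow_add, mul_assoc, ← mul_pow]; simp
  rw [← this]
  congr 2
  · ring
  · rw [mul_assoc]

lemma serre_semiconj (A : I → I → ℤ) (Z : R) (x y : I → R) (h : ∀ l, SemiconjBy Z (x l) (y l))
    (i j : I) : SemiconjBy Z (serreElt A x i j) (serreElt A y i j) := by
  unfold serreElt SemiconjBy
  rw [Finset.mul_sum, Finset.sum_mul]
  refine Finset.sum_congr rfl fun k _ => ?_
  rw [mul_smul_comm, smul_mul_assoc]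
  congr 1
  exact (((h i).pow_right k).mul_right (h j)).mul_right ((h i).pow_right _)

theorem serre_comm (A : I → I → ℤ) (θ : I → I) (hA : IsCartan A) (k : I) (T E : R)
    (x : I → R) (hT : ∀ l, T * x l = qZ (-(A k l + A (θ k) l)) • (x l * T))
    (hE : ∀ l, E * x l = qZ (-(A k l)) • (x l * E) + uu θ k T l)
    (i j : I) (h : i ≠ j) :
    ∃ z : KK, E * serreElt A x i j = z • (serreElt A x i j * E) := by
  obtain ⟨z, hz⟩ := master A θ hA k T x hT i j h
  refine ⟨z, ?_⟩
  have h1 := serre_semiconj A (!![E, 0; 1, 0] : Matrix (Fin 2) (Fin 2) R)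
    (fun l => Matrix.scalarAlgHom (Fin 2) KK (x l)) (XX A θ k T x) (by
      intro l
      unfold SemiconjBy XX
      have : Matrix.scalarAlgHom (Fin 2) KK (x l) = !![x l, 0; 0, x l] := by
        ext a b; fin_cases a <;> fin_cases b <;> simp
      rw [this]
      ext a b; fin_cases a <;> fin_cases b <;> simp [Matrix.mul_apply, Fin.sum_univ_two, hE]) i j
  rw [serre_map, hz] at h1
  have h2 := congrFun (congrFun h1 0) 0
  simpa [Matrix.mul_apply, Fin.sum_univ_two] using h2

theorem serre_comm' (A : I → I → ℤ) (θ : I → I) (hA : IsCartan A) (k : I) (T F : R)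
    (x : I → R) (hT : ∀ l, x l * T = qZ (-(A k l + A (θ k) l)) • (T * x l))
    (hF : ∀ l, x l * F = qZ (-(A k l)) • (F * x l) + uu θ k T l)
    (i j : I) (h : i ≠ j) :
    ∃ z : KK, serreElt A x i j * F = z • (F * serreElt A x i j) := by
  obtain ⟨z, hz⟩ := serre_comm A θ hA k (MulOpposite.op T) (MulOpposite.op F)
    (fun l => MulOpposite.op (x l)) (by
      intro l
      rw [← MulOpposite.op_mul, hT, MulOpposite.op_smul, MulOpposite.op_mul]) (by
      intro l
      rw [← MulOpposite.op_mul, hF, MulOpposite.op_add, MulOpposite.op_smul, MulOpposite.op_mul]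
      congr 1
      unfold uu
      split_ifs <;> simp) i j h
  refine ⟨z, ?_⟩
  rw [serre_op, mul_smul_comm, smul_mul_assoc, smul_comm] at hz
  have hz := (smul_right_injective _ (pow_ne_zero (serreN A i j) (by simp : (-1 : KK) ≠ 0))) hz
  rw [← MulOpposite.op_mul, ← MulOpposite.op_mul, ← MulOpposite.op_smul] at hz
  exact MulOpposite.op_injective hz

end comm

section quot

lemma rq_ind {X : Type} (r : FreeAlgebra KK X → FreeAlgebra KK X → Prop)
    (P : RingQuot r → Prop) (h1 : P 1) (ha : ∀ a b, P a → P b → P (a + b))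
    (hs : ∀ (c : KK) a, P a → P (c • a))
    (hm : ∀ x a, P a → P (RingQuot.mkAlgHom KK r (FreeAlgebra.ι KK x) * a)) : ∀ a, P a := by
  have key : ∀ w : FreeAlgebra KK X, ∀ a, P a → P (RingQuot.mkAlgHom KK r w * a) := by
    intro w
    induction w using FreeAlgebra.induction with
    | grade0 c => intro a h; rw [AlgHom.commutes, ← Algebra.smul_def]; exact hs _ _ h
    | grade1 x => exact fun a h => hm x a h
    | mul u v hu hv => intro a h; rw [map_mul, mul_assoc]; exact hu _ (hv _ h)
    | add u v hu hv => intro a h; rw [map_add, add_mul]; exact ha _ _ (hu _ h) (hv _ h)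
  intro a
  obtain ⟨w, rfl⟩ := RingQuot.mkAlgHom_surjective KK r a
  simpa using key w 1 h1

lemma um_ind (A : I → I → ℤ) (P : Um A → Prop) (h1 : P 1) (ha : ∀ a b, P a → P b → P (a + b))
    (hs : ∀ (c : KK) a, P a → P (c • a)) (hm : ∀ j a, P a → P (fgen A j * a)) : ∀ a, P a :=
  rq_ind _ P h1 ha hs hm

variable {R : Type} [Ring R] [Algebra KK R]

def umLift (A : I → I → ℤ) (x : I → R) (h : ∀ i j, i ≠ j → serreElt A x i j = 0) :
    Um A →ₐ[KK] R :=
  RingQuot.liftAlgHom KK ⟨FreeAlgebra.lift KK x, by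
    rintro _ _ ⟨i, j, hij⟩
    rw [← serre_map]
    simp only [FreeAlgebra.lift_ι_apply, map_zero]
    exact h i j hij⟩

lemma umLift_fgen (A : I → I → ℤ) (x : I → R) (h : ∀ i j, i ≠ j → serreElt A x i j = 0) (i : I) :
    umLift A x h (fgen A i) = x i := by
  simp [umLift, fgen]

lemma serre_fgen (A : I → I → ℤ) (i j : I) (h : i ≠ j) : serreElt A (fgen A) i j = 0 := by
  have := serre_map A (RingQuot.mkAlgHom KK (SerreRel A)) (FreeAlgebra.ι KK) i j
  change serreElt A (fgen A) i j = _ at this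
  rw [this, RingQuot.mkAlgHom_rel KK (SerreRel.serre i j h), map_zero]

/-- a copy of `Um A` with sealed instances (for the sake of instance search) -/
def UU (A : I → I → ℤ) : Type := Um A

instance (A : I → I → ℤ) : Ring (UU A) := inferInstanceAs (Ring (Um A))

instance (A : I → I → ℤ) : Algebra KK (UU A) := inferInstanceAs (Algebra KK (Um A))

def eU (A : I → I → ℤ) : Um A ≃ₐ[KK] UU A :=
  { toFun := fun a => a
    invFun := fun a => a
    left_inv := fun _ => rfl
    right_inv := fun _ => rfl
    map_mul' := fun _ _ => rfl
    map_add' := fun _ _ => rfl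
    commutes' := fun _ => rfl }

def fgU (A : I → I → ℤ) (i : I) : UU A := eU A (fgen A i)

lemma uu_ind (A : I → I → ℤ) (P : UU A → Prop) (h1 : P 1) (ha : ∀ a b, P a → P b → P (a + b))
    (hs : ∀ (c : KK) a, P a → P (c • a)) (hm : ∀ j a, P a → P (fgU A j * a)) : ∀ a, P a := by
  have key := um_ind A (fun a => P (eU A a)) (by simpa using h1)
    (fun a b h h' => by rw [map_add]; exact ha _ _ h h')
    (fun c a h => by rw [map_smul]; exact hs _ _ h)
    (fun j a h => by rw [map_mul]; exact hm _ _ h)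
  intro a
  simpa using key ((eU A).symm a)

def uuLift (A : I → I → ℤ) (x : I → R) (h : ∀ i j, i ≠ j → serreElt A x i j = 0) :
    UU A →ₐ[KK] R := (umLift A x h).comp (eU A).symm.toAlgHom

lemma uuLift_fgU (A : I → I → ℤ) (x : I → R) (h : ∀ i j, i ≠ j → serreElt A x i j = 0) (i : I) :
    uuLift A x h (fgU A i) = x i := by
  simp [uuLift, fgU, umLift_fgen]

lemma serre_fgU (A : I → I → ℤ) (i j : I) (h : i ≠ j) : serreElt A (fgU A) i j = 0 := by
  have := serre_map A (eU A).toAlgHom (fgen A) i j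
  change serreElt A (fgU A) i j = _ at this
  rw [this, serre_fgen A i j h, map_zero]

def tau (A : I → I → ℤ) (c : I → KK) : UU A →ₐ[KK] UU A :=
  uuLift A (fun l => c l • fgU A l) fun i j h => by
    rw [serre_scale, serre_fgU A i j h, smul_zero]

lemma tau_fgU (A : I → I → ℤ) (c : I → KK) (l : I) : tau A c (fgU A l) = c l • fgU A l :=
  uuLift_fgU _ _ _ _

end quot
end BT

namespace BT
section induced
variable (A : I → I → ℤ) (θ : I → I) {C : Type} [AddCommGroup C] [Module KK C]

/-- data of a module over the Borel part -/
structure BorelMod (A : I → I → ℤ) (θ : I → I) (C : Type) [AddCommGroup C] [Module KK C] where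
  tT : I → Module.End KK C
  tTi : I → Module.End KK C
  tE : I → Module.End KK C
  inv_r : ∀ i, tT i * tTi i = 1
  inv_l : ∀ i, tTi i * tT i = 1
  comm : ∀ i j, tT i * tT j = tT j * tT i
  th : ∀ i, tT (θ i) = tT i
  thi : ∀ i, tTi (θ i) = tTi i
  TE : ∀ i j, tT i * tE j = qZ (A i j + A (θ i) j) • (tE j * tT i)
  ser : ∀ i j, i ≠ j → serreElt A tE i j = 0

variable (C) in
abbrev NN : Type := UU A ⊗[KK] C

variable (C) in
def opFhom : UU A →ₐ[KK] Module.End KK (NN A C) :=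
  (Module.End.rTensorAlgHom KK (UU A) C).comp (Algebra.lmul KK (UU A))

variable (C) in
def opF (j : I) : Module.End KK (NN A C) := opFhom A C (fgU A j)

lemma opFhom_tmul (a b : UU A) (c : C) : opFhom A C a (b ⊗ₜ c) = (a * b) ⊗ₜ c := by
  rfl

lemma opF_tmul (j : I) (b : UU A) (c : C) : opF A C j (b ⊗ₜ c) = (fgU A j * b) ⊗ₜ c :=
  opFhom_tmul A _ _ _

variable {A θ}

lemma N_ind (X Y : Module.End KK (NN A C)) (h1 : ∀ c, X (1 ⊗ₜ c) = Y (1 ⊗ₜ c))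
    (hF : ∀ j n, X n = Y n → X (opF A C j n) = Y (opF A C j n)) : X = Y := by
  refine TensorProduct.ext' fun a => ?_
  refine uu_ind A (fun a => ∀ c : C, X (a ⊗ₜ c) = Y (a ⊗ₜ c)) h1 ?_ ?_ ?_ a
  · intro a b ha hb c
    rw [TensorProduct.add_tmul, map_add, map_add, ha, hb]
  · intro k a ha c
    rw [← TensorProduct.smul_tmul', map_smul, map_smul, ha]
  · intro j a ha c
    have := hF j _ (ha c)
    rwa [opF_tmul] at this

def wt (A : I → I → ℤ) (θ : I → I) (i j : I) : ℤ := A i j + A (θ i) j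

variable (D : BorelMod A θ C)

def opT (i : I) : Module.End KK (NN A C) :=
  TensorProduct.map (tau A fun l => qZ (-(wt A θ i l))).toLinearMap (D.tT i)

def opTi (i : I) : Module.End KK (NN A C) :=
  TensorProduct.map (tau A fun l => qZ (wt A θ i l)).toLinearMap (D.tTi i)

lemma opT_one (i : I) (c : C) : opT D i (1 ⊗ₜ c) = 1 ⊗ₜ D.tT i c := by
  simp [opT]

lemma opTi_one (i : I) (c : C) : opTi D i (1 ⊗ₜ c) = 1 ⊗ₜ D.tTi i c := by
  simp [opTi]

lemma opT_F (i j : I) : opT D i * opF A C j = qZ (-(wt A θ i j)) • (opF A C j * opT D i) := by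
  refine TensorProduct.ext' fun a c => ?_
  rw [LinearMap.smul_apply, Module.End.mul_apply, Module.End.mul_apply, opF_tmul]
  simp only [opT, TensorProduct.map_tmul, opF_tmul, AlgHom.toLinearMap_apply, map_mul, tau_fgU,
    smul_mul_assoc, TensorProduct.smul_tmul']

lemma opTi_F (i j : I) : opTi D i * opF A C j = qZ (wt A θ i j) • (opF A C j * opTi D i) := by
  refine TensorProduct.ext' fun a c => ?_
  rw [LinearMap.smul_apply, Module.End.mul_apply, Module.End.mul_apply, opF_tmul]
  simp only [opTi, TensorProduct.map_tmul, opF_tmul, AlgHom.toLinearMap_apply, map_mul, tau_fgU,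
    smul_mul_assoc, TensorProduct.smul_tmul']

lemma opF_serre (i j : I) (h : i ≠ j) : serreElt A (opF A C) i j = 0 := by
  have := serre_map (S := Module.End KK (NN A C)) A (opFhom A C) (fgU A) i j
  change serreElt A (opF A C) i j = _ at this
  rw [this, serre_fgU A i j h, map_zero]

def Phi (hA : IsCartan A) (k : I) :
    UU A →ₐ[KK] Matrix (Fin 2) (Fin 2) (Module.End KK (NN A C)) :=
  uuLift A (XX A θ k (opT D k) (opF A C)) fun i j h => by
    obtain ⟨z, hz⟩ := master A θ hA k (opT D k) (opF A C) (opT_F D k) i j h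
    rw [hz, opF_serre i j h, smul_zero]
    ext a b; fin_cases a <;> fin_cases b <;> simp

lemma Phi_low (hA : IsCartan A) (k : I) (a : UU A) :
    Phi D hA k a 1 0 = 0 ∧ Phi D hA k a 1 1 = opFhom A C a := by
  refine uu_ind A (fun a => Phi D hA k a 1 0 = 0 ∧ Phi D hA k a 1 1 = opFhom A C a) ?_ ?_ ?_ ?_ a
  · simp
  · rintro a b ⟨h1, h2⟩ ⟨h3, h4⟩
    simp [h1, h2, h3, h4]
  · rintro c a ⟨h1, h2⟩
    simp [h1, h2]
  · rintro j a ⟨h1, h2⟩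
    have : Phi D hA k (fgU A j) = XX A θ k (opT D k) (opF A C) j := uuLift_fgU _ _ _ _
    rw [map_mul, map_mul, this]
    simp [Matrix.mul_apply, Fin.sum_univ_two, XX, h1, h2, opF]

def opE (hA : IsCartan A) (k : I) : Module.End KK (NN A C) :=
  TensorProduct.lift (LinearMap.mk₂ KK
    (fun (a : UU A) (c : C) => Phi D hA k a 0 0 (1 ⊗ₜ D.tE k c) + Phi D hA k a 0 1 (1 ⊗ₜ c))
    (by intro a b c; simp only [map_add, Matrix.add_apply, LinearMap.add_apply]; abel)
    (by intro s a c; simp only [map_smul, Matrix.smul_apply, LinearMap.smul_apply, smul_add])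
    (by intro a b c; simp only [map_add, TensorProduct.tmul_add]; abel)
    (by intro s a c; simp only [map_smul, TensorProduct.tmul_smul, smul_add]))

lemma opE_tmul (hA : IsCartan A) (k : I) (a : UU A) (c : C) : opE D hA k (a ⊗ₜ c) =
    Phi D hA k a 0 0 (1 ⊗ₜ D.tE k c) + Phi D hA k a 0 1 (1 ⊗ₜ c) := by
  simp [opE]

lemma opE_one (hA : IsCartan A) (k : I) (c : C) : opE D hA k (1 ⊗ₜ c) = 1 ⊗ₜ D.tE k c := by
  simp [opE_tmul]

lemma opE_F (hA : IsCartan A) (k j : I) : opE D hA k * opF A C j =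
    qZ (-(A k j)) • (opF A C j * opE D hA k) + uu θ k (opT D k) j := by
  refine TensorProduct.ext' fun a c => ?_
  have h0 : Phi D hA k (fgU A j) = XX A θ k (opT D k) (opF A C) j := uuLift_fgU _ _ _ _
  obtain ⟨h1, h2⟩ := Phi_low D hA k a
  have h3 : Phi D hA k (fgU A j * a) 0 0 = qZ (-(A k j)) • (opF A C j * Phi D hA k a 0 0) := by
    rw [map_mul, h0]
    simp [Matrix.mul_apply, Fin.sum_univ_two, XX, h1]
  have h4 : Phi D hA k (fgU A j * a) 0 1 = qZ (-(A k j)) • (opF A C j * Phi D hA k a 0 1) +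
      uu θ k (opT D k) j * opFhom A C a := by
    rw [map_mul, h0]
    simp [Matrix.mul_apply, Fin.sum_univ_two, XX, h2]
  rw [Module.End.mul_apply, opF_tmul, opE_tmul, h3, h4, LinearMap.add_apply, LinearMap.add_apply,
    LinearMap.smul_apply, LinearMap.smul_apply, LinearMap.smul_apply, Module.End.mul_apply,
    Module.End.mul_apply, Module.End.mul_apply, Module.End.mul_apply, opE_tmul, opFhom_tmul,
    mul_one, map_add, smul_add, add_assoc]

end induced
end BT

namespace BT
section rels
variable {A : I → I → ℤ} {θ : I → I} {C : Type} [AddCommGroup C] [Module KK C]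
variable (D : BorelMod A θ C)

lemma qZ_add (a b : ℤ) : qZ (a + b) = qZ a * qZ b := zpow_add₀ qq_ne _ _

lemma qZ_ne (a : ℤ) : qZ a ≠ 0 := zpow_ne_zero _ qq_ne

lemma qZ_zero : qZ 0 = 1 := zpow_zero _

lemma opT_F' (i j : I) (n : NN A C) :
    opT D i (opF A C j n) = qZ (-(wt A θ i j)) • opF A C j (opT D i n) :=
  LinearMap.congr_fun (opT_F D i j) n

lemma opTi_F' (i j : I) (n : NN A C) :
    opTi D i (opF A C j n) = qZ (wt A θ i j) • opF A C j (opTi D i n) :=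
  LinearMap.congr_fun (opTi_F D i j) n

lemma opE_F' (hA : IsCartan A) (k j : I) (n : NN A C) :
    opE D hA k (opF A C j n) =
      qZ (-(A k j)) • opF A C j (opE D hA k n) + uu θ k (opT D k) j n :=
  LinearMap.congr_fun (opE_F D hA k j) n

lemma r_inv_r (i : I) : opT D i * opTi D i = 1 := by
  refine N_ind _ _ (fun c => ?_) fun j n h => ?_
  · have := LinearMap.congr_fun (D.inv_r i) c
    rw [Module.End.mul_apply] at this ⊢
    rw [opTi_one, opT_one, this]; rfl
  · rw [Module.End.mul_apply] at h ⊢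
    rw [opTi_F', map_smul, opT_F', smul_smul, ← qZ_add, h]
    simp [qZ_zero]

lemma r_inv_l (i : I) : opTi D i * opT D i = 1 := by
  refine N_ind _ _ (fun c => ?_) fun j n h => ?_
  · have := LinearMap.congr_fun (D.inv_l i) c
    rw [Module.End.mul_apply] at this ⊢
    rw [opT_one, opTi_one, this]; rfl
  · rw [Module.End.mul_apply] at h ⊢
    rw [opT_F', map_smul, opTi_F', smul_smul, ← qZ_add, h]
    simp [qZ_zero]

lemma r_comm (i j : I) : opT D i * opT D j = opT D j * opT D i := by
  refine N_ind _ _ (fun c => ?_) fun k n h => ?_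
  · have := LinearMap.congr_fun (D.comm i j) c
    simp only [Module.End.mul_apply] at this ⊢
    rw [opT_one, opT_one, opT_one, opT_one, this]
  · simp only [Module.End.mul_apply] at h ⊢
    rw [opT_F', map_smul, opT_F', h, opT_F', map_smul, opT_F', smul_comm]

lemma wt_th (hθ : IsTheta A θ) (i j : I) : wt A θ (θ i) j = wt A θ i j := by
  unfold wt; rw [hθ.1]; ring

lemma wt_th' (hθ : IsTheta A θ) (i j : I) : wt A θ i (θ j) = wt A θ i j := by
  unfold wt
  have h := hθ.2 (θ i) j
  rw [hθ.1] at h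
  rw [hθ.2, h]; ring

lemma r_th (hθ : IsTheta A θ) (i : I) : opT D (θ i) = opT D i := by
  unfold opT; rw [D.th]; simp only [wt_th hθ]

lemma r_thi (hθ : IsTheta A θ) (i : I) : opTi D (θ i) = opTi D i := by
  unfold opTi; rw [D.thi]; simp only [wt_th hθ]

lemma r_TE (hA : IsCartan A) (hθ : IsTheta A θ) (i j : I) :
    opT D i * opE D hA j = qZ (wt A θ i j) • (opE D hA j * opT D i) := by
  refine N_ind _ _ (fun c => ?_) fun k n h => ?_
  · have := LinearMap.congr_fun (D.TE i j) c
    simp only [LinearMap.smul_apply, Module.End.mul_apply] at this ⊢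
    rw [opT_one, opE_one, opE_one, opT_one, this, TensorProduct.tmul_smul]; rfl
  · simp only [LinearMap.smul_apply, Module.End.mul_apply] at h ⊢
    rw [opE_F', map_add, map_smul, opT_F', h, opT_F', map_smul, map_smul, opE_F', smul_add, smul_add]
    congr 1
    · simp only [smul_smul]
      congr 1; ring
    · have hc := LinearMap.congr_fun (r_comm D i j) n
      simp only [Module.End.mul_apply] at hc
      rw [smul_smul, ← qZ_add]
      unfold uu
      by_cases h1 : j = k
      · subst h1
        rw [add_neg_cancel, qZ_zero, one_smul]
        split_ifs <;> simp [hc]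
      · by_cases h2 : θ j = k
        · subst h2
          rw [wt_th' hθ, add_neg_cancel, qZ_zero, one_smul]
          simp [h1, hc]
        · simp [h1, h2]

lemma r_E_serre (hA : IsCartan A) (hθ : IsTheta A θ) (i j : I) (h : i ≠ j) :
    serreElt A (opE D hA) i j = 0 := by
  refine N_ind _ _ (fun c => ?_) fun k n hn => ?_
  · have key : ∀ (m : ℕ) (l : I) (c : C), (opE D hA l ^ m) (1 ⊗ₜ c) = 1 ⊗ₜ ((D.tE l ^ m) c) := by
      intro m l
      induction m with
      | zero => intro c; rfl
      | succ m ih => intro c; rw [pow_succ, pow_succ, Module.End.mul_apply, opE_one, ih]; rfl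
    have h2 : serreElt A (opE D hA) i j (1 ⊗ₜ c) = 1 ⊗ₜ (serreElt A D.tE i j c) := by
      simp only [serreElt, LinearMap.sum_apply, TensorProduct.tmul_sum, LinearMap.smul_apply,
        TensorProduct.tmul_smul, Module.End.mul_apply, key, opE_one]
    rw [h2, D.ser i j h]; simp
  · obtain ⟨z, hz⟩ := serre_comm' A θ hA k (opT D k) (opF A C k) (opE D hA) (by
        intro l
        have h1 := r_TE D hA hθ k l
        rw [h1, smul_smul, wt, ← qZ_add, neg_add_cancel, qZ_zero, one_smul]) (by
        intro l
        rw [opE_F, hA.1 l k]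
        congr 1
        unfold uu
        have e1 : (l = k) = (k = l) := propext eq_comm
        have e2 : (θ l = k) = (θ k = l) := propext
          ⟨fun h => by rw [← h, hθ.1], fun h => by rw [← h, hθ.1]⟩
        simp only [e1, e2]
        congr 1
        split_ifs with h
        · rw [← h, r_th D hθ]
        · rfl) i j h
    have h3 := LinearMap.congr_fun hz n
    simp only [LinearMap.smul_apply, Module.End.mul_apply] at h3
    rw [h3, hn]; simp

def genMap (hA : IsCartan A) : BGen I → Module.End KK (NN A C)
  | BGen.E i => opE D hA i
  | BGen.F i => opF A C i
  | BGen.T i => opT D i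
  | BGen.Ti i => opTi D i

def rho (hA : IsCartan A) (hθ : IsTheta A θ) : Bth A θ →ₐ[KK] Module.End KK (NN A C) :=
  RingQuot.liftAlgHom KK ⟨FreeAlgebra.lift KK (genMap D hA), by
    have eE : ∀ i, FreeAlgebra.lift KK (genMap D hA) (bE i) = opE D hA i :=
      fun i => FreeAlgebra.lift_ι_apply _ _
    have eF : ∀ i, FreeAlgebra.lift KK (genMap D hA) (bF i) = opF A C i :=
      fun i => FreeAlgebra.lift_ι_apply _ _
    have eT : ∀ i, FreeAlgebra.lift KK (genMap D hA) (bT i) = opT D i :=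
      fun i => FreeAlgebra.lift_ι_apply _ _
    have eTi : ∀ i, FreeAlgebra.lift KK (genMap D hA) (bTi i) = opTi D i :=
      fun i => FreeAlgebra.lift_ι_apply _ _
    intro x y h
    cases h with
    | T_inv_right i => rw [map_mul, eT, eTi, map_one, r_inv_r]
    | T_inv_left i => rw [map_mul, eT, eTi, map_one, r_inv_l]
    | T_comm i j => rw [map_mul, map_mul, eT, eT, r_comm]
    | T_theta i => rw [eT, eT, r_th D hθ]
    | Ti_theta i => rw [eTi, eTi, r_thi D hθ]
    | TE i j => rw [map_mul, map_smul, map_mul, eT, eE]; exact r_TE D hA hθ i j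
    | TF i j => rw [map_mul, map_smul, map_mul, eT, eF]; exact opT_F D i j
    | EF i j =>
      rw [map_add, map_add, map_mul, map_smul, map_mul, eE, eF, opE_F, uu, add_assoc]
      congr 2
      · split_ifs <;> simp
      · split_ifs <;> simp [eT]
    | Eserre i j h =>
      have := serre_map (S := Module.End KK (NN A C)) A (FreeAlgebra.lift KK (genMap D hA)) bE i j
      rw [← this, map_zero]
      simp only [eE]
      exact r_E_serre D hA hθ i j h
    | Fserre i j h =>
      have := serre_map (S := Module.End KK (NN A C)) A (FreeAlgebra.lift KK (genMap D hA)) bF i j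
      rw [← this, map_zero]
      simp only [eF]
      exact opF_serre i j h⟩

variable (hA : IsCartan A) (hθ : IsTheta A θ)

lemma rho_E (i : I) : rho D hA hθ (Eg A θ i) = opE D hA i := by
  simp [rho, Eg, bE, genMap]

lemma rho_F (i : I) : rho D hA hθ (Fg A θ i) = opF A C i := by
  simp [rho, Fg, bF, genMap]

lemma rho_T (i : I) : rho D hA hθ (Tg A θ i) = opT D i := by
  simp [rho, Tg, bT, genMap]

lemma rho_Ti (i : I) : rho D hA hθ (Tig A θ i) = opTi D i := by
  simp [rho, Tig, bTi, genMap]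

end rels
end BT

namespace BT
section borel
variable {A : I → I → ℤ} {θ : I → I}

abbrev GG (θ : I → I) : Type := Orb θ →₀ ℤ
def LL (θ : I → I) : Type := GG θ →₀ KK

instance (θ : I → I) : AddCommGroup (LL θ) := inferInstanceAs (AddCommGroup (GG θ →₀ KK))

instance (θ : I → I) : Module KK (LL θ) := inferInstanceAs (Module KK (GG θ →₀ KK))

def eL (θ : I → I) : (GG θ →₀ KK) ≃ₗ[KK] LL θ := LinearEquiv.refl KK (GG θ →₀ KK)

def sg (μ : GG θ) (c : KK) : LL θ := eL θ (Finsupp.single μ c)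

abbrev CC (A : I → I → ℤ) (θ : I → I) : Type := LL θ ⊗[KK] UU A

def shift (ν : GG θ) : LL θ →ₗ[KK] LL θ :=
  (eL θ).toLinearMap ∘ₗ Finsupp.lmapDomain KK KK (fun μ => ν + μ) ∘ₗ (eL θ).symm.toLinearMap

lemma shift_single (ν μ : GG θ) (c : KK) : shift ν (sg μ c) = sg (ν + μ) c := by
  simp [shift, sg]

def wo (hθ : IsTheta A θ) (l : I) : Orb θ → ℤ :=
  Quot.lift (fun i => wt A θ i l) fun i j h => by
    subst h; exact (wt_th hθ i l).symm

def chi (hθ : IsTheta A θ) (l : I) (μ : GG θ) : ℤ := μ.sum fun o n => n * wo hθ l o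

lemma chi_add (hθ : IsTheta A θ) (l : I) (μ ν : GG θ) :
    chi hθ l (μ + ν) = chi hθ l μ + chi hθ l ν := by
  unfold chi
  exact Finsupp.sum_add_index' (by simp) (by intros; ring)

lemma chi_single (hθ : IsTheta A θ) (l i : I) (n : ℤ) :
    chi hθ l (Finsupp.single (Quot.mk _ i) n) = n * wt A θ i l := by
  unfold chi
  rw [Finsupp.sum_single_index (by simp)]
  rfl

def tw (hθ : IsTheta A θ) (l : I) : LL θ →ₗ[KK] LL θ :=
  (Finsupp.linearCombination KK fun μ => sg μ (qZ (-(chi hθ l μ)))) ∘ₗ (eL θ).symm.toLinearMap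

lemma sg_smul (μ : GG θ) (c d : KK) : sg μ (c * d) = c • sg μ d := by
  rw [sg, sg, ← map_smul, Finsupp.smul_single, smul_eq_mul]

lemma tw_single (hθ : IsTheta A θ) (l : I) (μ : GG θ) (c : KK) :
    tw hθ l (sg μ c) = qZ (-(chi hθ l μ)) • sg μ c := by
  rw [tw, LinearMap.comp_apply, sg, LinearEquiv.coe_coe, LinearEquiv.symm_apply_apply,
    Finsupp.linearCombination_single, ← sg_smul, mul_comm, sg_smul]
  rw [← sg, ← sg_smul]

lemma LL_ind (P : LL θ → Prop) (ha : ∀ a b, P a → P b → P (a + b))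
    (hs : ∀ μ c, P (sg μ c)) : ∀ t, P t := by
  intro t
  obtain ⟨t, rfl⟩ := (eL θ).surjective t
  induction t using Finsupp.induction_linear with
  | zero => have := hs 0 0; rwa [sg, Finsupp.single_zero] at this
  | add f g hf hg => rw [map_add]; exact ha _ _ hf hg
  | single μ c => exact hs μ c

lemma CC_ext (X Y : Module.End KK (CC A θ))
    (h : ∀ μ b, X (sg μ 1 ⊗ₜ b) = Y (sg μ 1 ⊗ₜ b)) : X = Y := by
  refine TensorProduct.ext' fun t b => ?_
  refine LL_ind (fun t => X (t ⊗ₜ b) = Y (t ⊗ₜ b)) ?_ ?_ t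
  · intro f g hf hg
    rw [TensorProduct.add_tmul, map_add, map_add, hf, hg]
  · intro μ c
    rw [← mul_one c, sg_smul, ← TensorProduct.smul_tmul', map_smul, map_smul, h]

variable (A) in
def cT (ν : GG θ) : Module.End KK (CC A θ) := TensorProduct.map (shift ν) LinearMap.id

def cE (hθ : IsTheta A θ) (l : I) : Module.End KK (CC A θ) :=
  TensorProduct.map (tw hθ l) (Algebra.lmul KK (UU A) (fgU A l))

lemma cT_tmul (ν μ : GG θ) (c : KK) (b : UU A) :
    cT A ν (sg μ c ⊗ₜ b) = sg (ν + μ) c ⊗ₜ b := by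
  rw [cT, TensorProduct.map_tmul, shift_single]; rfl

lemma cE_tmul (hθ : IsTheta A θ) (l : I) (μ : GG θ) (c : KK) (b : UU A) :
    cE hθ l (sg μ c ⊗ₜ b) =
      qZ (-(chi hθ l μ)) • (sg μ c ⊗ₜ (fgU A l * b)) := by
  rw [cE, TensorProduct.map_tmul, tw_single, TensorProduct.smul_tmul']; rfl

lemma cT_mul (μ ν : GG θ) : cT A μ * cT A ν = cT A (μ + ν) := by
  refine CC_ext _ _ fun κ b => ?_
  rw [Module.End.mul_apply, cT_tmul, cT_tmul, cT_tmul, add_assoc]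

lemma cT_zero : cT A (0 : GG θ) = 1 := by
  refine CC_ext _ _ fun κ b => ?_
  rw [cT_tmul, zero_add]; rfl

lemma serre_inter {M M' : Type} [AddCommGroup M] [Module KK M] [AddCommGroup M'] [Module KK M']
    (x : I → Module.End KK M) (y : I → Module.End KK M') (f : M →ₗ[KK] M')
    (h : ∀ l m, y l (f m) = f (x l m)) (i j : I) (m : M) :
    serreElt A y i j (f m) = f (serreElt A x i j m) := by
  have key : ∀ (k : ℕ) (l : I) (c : M), (y l ^ k) (f c) = f ((x l ^ k) c) := by
    intro k l
    induction k with
    | zero => intro c; rfl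
    | succ m ih => intro c; rw [pow_succ, pow_succ, Module.End.mul_apply, h, ih]; rfl
  simp only [serreElt, LinearMap.sum_apply, LinearMap.smul_apply, Module.End.mul_apply, key, h,
    map_sum, map_smul]

lemma cE_serre (hθ : IsTheta A θ) (i j : I) (h : i ≠ j) :
    serreElt A (cE (A := A) hθ) i j = 0 := by
  refine CC_ext _ _ fun μ b => ?_
  have h1 := serre_inter (A := A) (fun l => qZ (-(chi hθ l μ)) • Algebra.lmul KK (UU A) (fgU A l))
    (cE hθ) (TensorProduct.mk KK (LL θ) (UU A) (sg μ 1)) (by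
      intro l m
      rw [TensorProduct.mk_apply, cE_tmul, LinearMap.smul_apply, map_smul]; rfl) i j b
  rw [TensorProduct.mk_apply] at h1
  rw [h1, serre_scale]
  have h2 := serre_map (S := Module.End KK (UU A)) A (Algebra.lmul KK (UU A)) (fgU A) i j
  rw [h2, serre_fgU A i j h]
  simp

def borel (hθ : IsTheta A θ) : BorelMod A θ (CC A θ) where
  tT i := cT A (Finsupp.single (Quot.mk _ i) 1)
  tTi i := cT A (Finsupp.single (Quot.mk _ i) (-1))
  tE l := cE hθ l
  inv_r i := by rw [cT_mul, ← Finsupp.single_add]; simp [cT_zero]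
  inv_l i := by rw [cT_mul, ← Finsupp.single_add]; simp [cT_zero]
  comm i j := by rw [cT_mul, cT_mul, add_comm]
  th i := by
    have : (Quot.mk _ (θ i) : Orb θ) = Quot.mk _ i := (Quot.sound (r := fun i j : I => θ i = j) (rfl : θ i = θ i)).symm
    rw [this]
  thi i := by
    have : (Quot.mk _ (θ i) : Orb θ) = Quot.mk _ i := (Quot.sound (r := fun i j : I => θ i = j) (rfl : θ i = θ i)).symm
    rw [this]
  TE i j := by
    refine CC_ext _ _ fun μ b => ?_
    rw [LinearMap.smul_apply, Module.End.mul_apply, Module.End.mul_apply, cT_tmul, cE_tmul,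
      cE_tmul, map_smul, cT_tmul, smul_smul, chi_add, chi_single, ← qZ_add]
    congr 2
    unfold wt; ring
  ser i j h := cE_serre hθ i j h

end borel

section facts
variable (A : I → I → ℤ) (θ : I → I)

lemma brel {x y : FreeAlgebra KK (BGen I)} (h : BRel A θ x y) :
    RingQuot.mkAlgHom KK (BRel A θ) x = RingQuot.mkAlgHom KK (BRel A θ) y :=
  RingQuot.mkAlgHom_rel KK h

lemma g_inv_r (i : I) : Tg A θ i * Tig A θ i = 1 := by
  have := brel A θ (BRel.T_inv_right i)
  rwa [map_mul, map_one] at this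

lemma g_inv_l (i : I) : Tig A θ i * Tg A θ i = 1 := by
  have := brel A θ (BRel.T_inv_left i)
  rwa [map_mul, map_one] at this

lemma g_comm (i j : I) : Tg A θ i * Tg A θ j = Tg A θ j * Tg A θ i := by
  have := brel A θ (BRel.T_comm i j)
  rwa [map_mul, map_mul] at this

lemma g_th (i : I) : Tg A θ (θ i) = Tg A θ i := brel A θ (BRel.T_theta i)

lemma g_thi (i : I) : Tig A θ (θ i) = Tig A θ i := brel A θ (BRel.Ti_theta i)

lemma g_TE (i j : I) : Tg A θ i * Eg A θ j = qZ (wt A θ i j) • (Eg A θ j * Tg A θ i) := by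
  have := brel A θ (BRel.TE i j)
  rwa [map_mul, map_smul, map_mul] at this

lemma g_TF (i j : I) : Tg A θ i * Fg A θ j = qZ (-(wt A θ i j)) • (Fg A θ j * Tg A θ i) := by
  have := brel A θ (BRel.TF i j)
  rwa [map_mul, map_smul, map_mul] at this

lemma g_EF (i j : I) : Eg A θ i * Fg A θ j = qZ (-(A i j)) • (Fg A θ j * Eg A θ i) +
    (if i = j then 1 else 0) + (if θ i = j then Tg A θ i else 0) := by
  have := brel A θ (BRel.EF i j)
  rw [map_mul, map_add, map_add, map_smul, map_mul, apply_ite (RingQuot.mkAlgHom KK (BRel A θ)),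
    apply_ite (RingQuot.mkAlgHom KK (BRel A θ)), map_one, map_zero] at this
  exact this

lemma g_Es (i j : I) (h : i ≠ j) : serreElt A (Eg A θ) i j = 0 := by
  have := serre_map A (RingQuot.mkAlgHom KK (BRel A θ)) bE i j
  change serreElt A (Eg A θ) i j = _ at this
  rw [this, brel A θ (BRel.Eserre i j h), map_zero]

lemma g_Fs (i j : I) (h : i ≠ j) : serreElt A (Fg A θ) i j = 0 := by
  have := serre_map A (RingQuot.mkAlgHom KK (BRel A θ)) bF i j
  change serreElt A (Fg A θ) i j = _ at this
  rw [this, brel A θ (BRel.Fserre i j h), map_zero]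

lemma b_ind (P : Bth A θ → Prop) (h1 : P 1) (ha : ∀ a b, P a → P b → P (a + b))
    (hs : ∀ (c : KK) a, P a → P (c • a))
    (hE : ∀ i a, P a → P (Eg A θ i * a)) (hF : ∀ i a, P a → P (Fg A θ i * a))
    (hT : ∀ i a, P a → P (Tg A θ i * a)) (hTi : ∀ i a, P a → P (Tig A θ i * a)) : ∀ a, P a := by
  refine rq_ind _ P h1 ha hs ?_
  rintro (i | i | i | i) a h
  · exact hE i a h
  · exact hF i a h
  · exact hT i a h
  · exact hTi i a h

def Tu (i : I) : (Bth A θ)ˣ := ⟨Tg A θ i, Tig A θ i, g_inv_r A θ i, g_inv_l A θ i⟩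

def TuO : Orb θ → (Bth A θ)ˣ := Quot.lift (Tu A θ) fun i j h => by
  subst h; exact Units.ext (g_th A θ i).symm

lemma TuO_comm : ∀ x ∈ Set.range (TuO A θ), ∀ y ∈ Set.range (TuO A θ), x * y = y * x := by
  rintro _ ⟨⟨i⟩, rfl⟩ _ ⟨⟨j⟩, rfl⟩
  exact Units.ext (g_comm A θ i j)

abbrev GamT : Type := Subgroup.closure (Set.range (TuO A θ))

instance : CommGroup (GamT A θ) := Subgroup.closureCommGroupOfComm (TuO_comm A θ)

def gam (o : Orb θ) : GamT A θ := ⟨TuO A θ o, Subgroup.subset_closure ⟨o, rfl⟩⟩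

def valH : GamT A θ →* Bth A θ :=
  (Units.coeHom (Bth A θ)).comp (Subgroup.closure (Set.range (TuO A θ))).subtype

/-- the ordered monomial -/
def mono (μ : GG θ) : Bth A θ := valH A θ (μ.prod fun o n => gam A θ o ^ n)

lemma mono_add (μ ν : GG θ) : mono A θ (μ + ν) = mono A θ μ * mono A θ ν := by
  unfold mono
  rw [← map_mul, Finsupp.prod_add_index' (by simp) (by intro o a b; exact zpow_add _ _ _)]

lemma mono_zero : mono A θ 0 = 1 := by
  simp [mono]

lemma valH_pos (i : I) (k : ℕ) : valH A θ (gam A θ (Quot.mk _ i) ^ (k : ℤ)) = Tg A θ i ^ k := by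
  rw [zpow_natCast, map_pow]; rfl

lemma valH_neg (i : I) (k : ℕ) : valH A θ (gam A θ (Quot.mk _ i) ^ (-(k : ℤ))) = Tig A θ i ^ k := by
  rw [zpow_neg, zpow_natCast, ← inv_pow, map_pow]; rfl

lemma mono_single_pos (i : I) (k : ℕ) :
    mono A θ (Finsupp.single (Quot.mk _ i) (k : ℤ)) = Tg A θ i ^ k := by
  unfold mono
  rw [Finsupp.prod_single_index (by simp), valH_pos]

lemma mono_single_neg (i : I) (k : ℕ) :
    mono A θ (Finsupp.single (Quot.mk _ i) (-(k : ℤ))) = Tig A θ i ^ k := by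
  unfold mono
  rw [Finsupp.prod_single_index (by simp), valH_neg]

lemma mono_list (Tm : Orb θ → ℤ → Bth A θ)
    (hTm : ∀ (i : I) (k : ℕ), Tm (Quot.mk _ i) (k : ℤ) = Tg A θ i ^ k ∧
        Tm (Quot.mk _ i) (-(k : ℤ)) = Tig A θ i ^ k) (μ : GG θ) :
    (μ.support.toList.map fun o => Tm o (μ o)).prod = mono A θ μ := by
  have h : ∀ o n, Tm o n = valH A θ (gam A θ o ^ n) := by
    rintro ⟨i⟩ n
    rcases Int.eq_nat_or_neg n with ⟨k, rfl | rfl⟩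
    · rw [valH_pos, (hTm i k).1]
    · rw [valH_neg, (hTm i k).2]
  simp only [h]
  rw [mono, Finsupp.prod, ← Finset.prod_map_toList, map_list_prod, List.map_map]
  rfl

/-- induction on exponents -/
lemma gg_ind (P : GG θ → Prop) (h0 : P 0) (ha : ∀ a b, P a → P b → P (a + b))
    (h1 : ∀ i, P (Finsupp.single (Quot.mk _ i) 1)) (h2 : ∀ i, P (Finsupp.single (Quot.mk _ i) (-1))) :
    ∀ μ, P μ := by
  intro μ
  induction μ using Finsupp.induction_linear with
  | zero => exact h0
  | add f g hf hg => exact ha _ _ hf hg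
  | single o n =>
    obtain ⟨i⟩ := o
    induction n using Int.induction_on with
    | zero => simpa using h0
    | succ k ih => rw [Finsupp.single_add]; exact ha _ _ ih (h1 i)
    | pred k ih => rw [sub_eq_add_neg, Finsupp.single_add]; exact ha _ _ ih (h2 i)

end facts
end BT

namespace BT
section final
variable {A : I → I → ℤ} {θ : I → I} (hA : IsCartan A) (hθ : IsTheta A θ)
  (Fmap Emap : Um A →ₐ[KK] Bth A θ) (g : (GG θ →₀ KK) →ₗ[KK] Bth A θ)
  (hF : ∀ i, Fmap (fgen A i) = Fg A θ i) (hE : ∀ i, Emap (fgen A i) = Eg A θ i)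
  (hg : ∀ μ c, g (Finsupp.single μ c) = c • mono A θ μ)

abbrev RR : Bth A θ →ₐ[KK] Module.End KK (NN A (CC A θ)) := rho (borel hθ) hA hθ

lemma chi_zero (l : I) : chi hθ l 0 = 0 := by simp [chi]

include hE in
lemma act_E (b : Um A) :
    RR hA hθ (Emap b) (1 ⊗ₜ (sg 0 1 ⊗ₜ 1)) = 1 ⊗ₜ (sg 0 1 ⊗ₜ eU A b) := by
  refine um_ind A (fun b => RR hA hθ (Emap b) (1 ⊗ₜ (sg 0 1 ⊗ₜ 1)) =
    1 ⊗ₜ (sg 0 1 ⊗ₜ eU A b)) ?_ ?_ ?_ ?_ b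
  · rw [map_one, map_one, map_one]; rfl
  · intro a b ha hb
    rw [map_add, map_add, LinearMap.add_apply, ha, hb, map_add, TensorProduct.tmul_add,
      TensorProduct.tmul_add]
  · intro c a ha
    rw [map_smul, map_smul, LinearMap.smul_apply, ha, map_smul, TensorProduct.tmul_smul,
      TensorProduct.tmul_smul]
  · intro i a ha
    rw [map_mul, map_mul, Module.End.mul_apply, ha, hE, rho_E, opE_one]
    change 1 ⊗ₜ (cE hθ i _) = _
    rw [cE_tmul, chi_zero, neg_zero, qZ_zero, one_smul, map_mul]; rfl

lemma act_T (μ : GG θ) (c : CC A θ) :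
    RR hA hθ (mono A θ μ) (1 ⊗ₜ c) = 1 ⊗ₜ (cT A μ c) := by
  refine gg_ind θ (fun μ => ∀ c : CC A θ, RR hA hθ (mono A θ μ) (1 ⊗ₜ c) = 1 ⊗ₜ (cT A μ c))
    ?_ ?_ ?_ ?_ μ c
  · intro c
    rw [mono_zero, map_one, cT_zero]; rfl
  · intro a b ha hb c
    rw [mono_add, map_mul, Module.End.mul_apply, hb, ha, ← cT_mul]; rfl
  · intro i c
    have := mono_single_pos A θ i 1
    rw [pow_one, Nat.cast_one] at this
    rw [this, rho_T, opT_one]; rfl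
  · intro i c
    have := mono_single_neg A θ i 1
    rw [pow_one, Nat.cast_one] at this
    rw [this, rho_Ti, opTi_one]; rfl

include hF in
lemma act_F (a : Um A) (n : NN A (CC A θ)) :
    RR hA hθ (Fmap a) n = opFhom A (CC A θ) (eU A a) n := by
  refine um_ind A (fun a => ∀ n, RR hA hθ (Fmap a) n = opFhom A (CC A θ) (eU A a) n)
    ?_ ?_ ?_ ?_ a n
  · intro n; rw [map_one, map_one, map_one, map_one]
  · intro a b ha hb n
    rw [map_add, map_add, LinearMap.add_apply, ha, hb, map_add, map_add, LinearMap.add_apply]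
  · intro c a ha n
    rw [map_smul, map_smul, LinearMap.smul_apply, ha, map_smul, map_smul, LinearMap.smul_apply]
  · intro i a ha n
    rw [map_mul, map_mul, Module.End.mul_apply, ha, hF, rho_F, map_mul, map_mul,
      Module.End.mul_apply]; rfl

include hF hE hg in
lemma act_all (a : Um A) (t : GG θ →₀ KK) (b : Um A) :
    RR hA hθ (Fmap a * (g t * Emap b)) (1 ⊗ₜ (sg 0 1 ⊗ₜ 1)) =
      eU A a ⊗ₜ (eL θ t ⊗ₜ eU A b) := by
  have key : RR hA hθ (g t) (1 ⊗ₜ (sg 0 1 ⊗ₜ eU A b)) = 1 ⊗ₜ (eL θ t ⊗ₜ eU A b) := by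
    induction t using Finsupp.induction_linear with
    | zero => simp
    | add f h hf hh =>
      rw [map_add, map_add, LinearMap.add_apply, hf, hh, map_add, TensorProduct.add_tmul,
        TensorProduct.tmul_add]
    | single μ c =>
      rw [hg, map_smul, LinearMap.smul_apply, act_T, cT_tmul, add_zero,
        ← TensorProduct.tmul_smul, TensorProduct.smul_tmul', ← sg_smul, mul_one]; rfl
  rw [map_mul, map_mul, Module.End.mul_apply, Module.End.mul_apply, act_E hA hθ Emap hE, key,
    act_F hA hθ Fmap hF, opFhom_tmul, mul_one]

abbrev MM : Um A ⊗[KK] ((GG θ →₀ KK) ⊗[KK] Um A) →ₗ[KK] Bth A θ :=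
  (LinearMap.mul' KK (Bth A θ)).comp
          (TensorProduct.map Fmap.toLinearMap
            ((LinearMap.mul' KK (Bth A θ)).comp
              (TensorProduct.map g Emap.toLinearMap)))

lemma MM_tmul (a : Um A) (t : GG θ →₀ KK) (b : Um A) :
    MM Fmap Emap g (a ⊗ₜ (t ⊗ₜ b)) = Fmap a * (g t * Emap b) := by
  simp [MM]

include hA hθ hF hE hg in
lemma MM_inj : Function.Injective (MM Fmap Emap g) := by
  let ev : Bth A θ →ₗ[KK] NN A (CC A θ) :=
    (LinearMap.applyₗ (R := KK) (1 ⊗ₜ (sg 0 1 ⊗ₜ 1) : NN A (CC A θ))) ∘ₗ (RR hA hθ).toLinearMap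
  let e : Um A ⊗[KK] ((GG θ →₀ KK) ⊗[KK] Um A) ≃ₗ[KK] NN A (CC A θ) :=
    TensorProduct.congr (eU A).toLinearEquiv
      (TensorProduct.congr (eL θ) (eU A).toLinearEquiv)
  have h : ev ∘ₗ MM Fmap Emap g = e.toLinearMap := by
    refine TensorProduct.ext' fun a y => ?_
    induction y using TensorProduct.induction_on with
    | zero => simp
    | add x y hx hy => rw [TensorProduct.tmul_add, map_add, map_add, hx, hy]
    | tmul t b =>
      rw [LinearMap.comp_apply, MM_tmul]
      exact act_all hA hθ Fmap Emap g hF hE hg a t b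
  have h2 : Function.Injective (ev ∘ₗ MM Fmap Emap g) := by
    rw [h]; exact e.injective
  rw [LinearMap.coe_comp] at h2
  exact h2.of_comp

abbrev SS : Submodule KK (Bth A θ) := LinearMap.range (MM Fmap Emap g)

lemma SS_mem (a : Um A) (t : GG θ →₀ KK) (b : Um A) :
    Fmap a * (g t * Emap b) ∈ SS Fmap Emap g := ⟨_, MM_tmul Fmap Emap g a t b⟩

include hg in
lemma SS_mem' (a : Um A) (μ : GG θ) (b : Um A) :
    Fmap a * (mono A θ μ * Emap b) ∈ SS Fmap Emap g := by
  have := SS_mem Fmap Emap g a (Finsupp.single μ 1) b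
  rwa [hg, one_smul] at this

include hg in
/-- closure of the range under left multiplication -/
lemma SS_mul (x : Bth A θ)
    (h : ∀ a μ b, x * (Fmap a * (mono A θ μ * Emap b)) ∈ SS Fmap Emap g)
    (y : Bth A θ) (hy : y ∈ SS Fmap Emap g) : x * y ∈ SS Fmap Emap g := by
  obtain ⟨z, rfl⟩ := hy
  induction z using TensorProduct.induction_on with
  | zero => rw [map_zero, mul_zero]; exact Submodule.zero_mem _
  | add u v hu hv => rw [map_add, mul_add]; exact Submodule.add_mem _ hu hv
  | tmul a w =>
    induction w using TensorProduct.induction_on with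
    | zero => rw [TensorProduct.tmul_zero, map_zero, mul_zero]; exact Submodule.zero_mem _
    | add u v hu hv =>
      rw [TensorProduct.tmul_add, map_add, mul_add]; exact Submodule.add_mem _ hu hv
    | tmul t b =>
      rw [MM_tmul]
      induction t using Finsupp.induction_linear with
      | zero => simp
      | add u v hu hv =>
        rw [map_add, add_mul, mul_add, mul_add]; exact Submodule.add_mem _ hu hv
      | single μ c =>
        rw [hg, smul_mul_assoc, mul_smul_comm, mul_smul_comm]
        exact Submodule.smul_mem _ _ (h a μ b)

include hF hg in
lemma SS_F (i : I) (y : Bth A θ) (hy : y ∈ SS Fmap Emap g) :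
    Fg A θ i * y ∈ SS Fmap Emap g := by
  refine SS_mul Fmap Emap g hg _ (fun a μ b => ?_) y hy
  rw [← hF, ← mul_assoc, ← map_mul]
  exact SS_mem' Fmap Emap g hg _ _ _

include hF hg in
/-- reduction to the vacuum -/
lemma SS_red (x : Bth A θ) (h1 : ∀ μ b, x * (mono A θ μ * Emap b) ∈ SS Fmap Emap g)
    (h2 : ∀ j y, y ∈ SS Fmap Emap g → x * y ∈ SS Fmap Emap g →
      x * (Fg A θ j * y) ∈ SS Fmap Emap g)
    (y : Bth A θ) (hy : y ∈ SS Fmap Emap g) : x * y ∈ SS Fmap Emap g := by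
  refine SS_mul Fmap Emap g hg _ (fun a => ?_) y hy
  refine um_ind A (fun a => ∀ μ b, x * (Fmap a * (mono A θ μ * Emap b)) ∈ SS Fmap Emap g)
    ?_ ?_ ?_ ?_ a
  · intro μ b; rw [map_one, one_mul]; exact h1 μ b
  · intro a c ha hc μ b
    rw [map_add, add_mul, mul_add]; exact Submodule.add_mem _ (ha μ b) (hc μ b)
  · intro s a ha μ b
    rw [map_smul, smul_mul_assoc, mul_smul_comm]; exact Submodule.smul_mem _ _ (ha μ b)
  · intro j a ha μ b
    rw [map_mul, hF, mul_assoc]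
    exact h2 j _ (SS_mem' Fmap Emap g hg a μ b) (ha μ b)

include hF hg in
lemma SS_T (i : I) (y : Bth A θ) (hy : y ∈ SS Fmap Emap g) :
    Tg A θ i * y ∈ SS Fmap Emap g := by
  refine SS_red Fmap Emap g hF hg _ ?_ ?_ y hy
  · intro μ b
    have := mono_single_pos A θ i 1
    rw [pow_one] at this
    rw [← this, ← mul_assoc, ← mono_add]
    have := SS_mem' Fmap Emap g hg 1 (Finsupp.single (Quot.mk _ i) ((1 : ℕ) : ℤ) + μ) b
    rwa [map_one, one_mul] at this
  · intro j y hy h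
    rw [← mul_assoc, g_TF, smul_mul_assoc, mul_assoc]
    exact Submodule.smul_mem _ _ (SS_F Fmap Emap g hF hg j _ h)

lemma g_TiF (i j : I) : Tig A θ i * Fg A θ j = qZ (wt A θ i j) • (Fg A θ j * Tig A θ i) := by
  have h : Fg A θ j = qZ (wt A θ i j) • (Tg A θ i * (Fg A θ j * Tig A θ i)) := by
    rw [← mul_assoc, g_TF, smul_mul_assoc, smul_smul, ← qZ_add, add_neg_cancel, qZ_zero, one_smul,
      mul_assoc, g_inv_r, mul_one]
  conv_lhs => rw [h]
  rw [mul_smul_comm, ← mul_assoc, g_inv_l, one_mul]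

lemma g_ET (i j : I) : Eg A θ j * Tg A θ i = qZ (-(wt A θ i j)) • (Tg A θ i * Eg A θ j) := by
  rw [g_TE, smul_smul, ← qZ_add, neg_add_cancel, qZ_zero, one_smul]

lemma g_ETi (i j : I) : Eg A θ j * Tig A θ i = qZ (wt A θ i j) • (Tig A θ i * Eg A θ j) := by
  have h : Eg A θ j = qZ (wt A θ i j) • (Tig A θ i * (Eg A θ j * Tg A θ i)) := by
    rw [← mul_smul_comm, ← g_TE, ← mul_assoc, g_inv_l, one_mul]
  conv_lhs => rw [h]
  rw [smul_mul_assoc, mul_assoc, mul_assoc, g_inv_r, mul_one]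

include hF hg in
lemma SS_Ti (i : I) (y : Bth A θ) (hy : y ∈ SS Fmap Emap g) :
    Tig A θ i * y ∈ SS Fmap Emap g := by
  refine SS_red Fmap Emap g hF hg _ ?_ ?_ y hy
  · intro μ b
    have := mono_single_neg A θ i 1
    rw [pow_one] at this
    rw [← this, ← mul_assoc, ← mono_add]
    have := SS_mem' Fmap Emap g hg 1 (Finsupp.single (Quot.mk _ i) (-((1 : ℕ) : ℤ)) + μ) b
    rwa [map_one, one_mul] at this
  · intro j y hy h
    rw [← mul_assoc, g_TiF, smul_mul_assoc, mul_assoc]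
    exact Submodule.smul_mem _ _ (SS_F Fmap Emap g hF hg j _ h)

lemma g_Emono (i : I) (μ : GG θ) :
    ∃ z : KK, Eg A θ i * mono A θ μ = z • (mono A θ μ * Eg A θ i) := by
  refine gg_ind θ (fun μ => ∃ z : KK, Eg A θ i * mono A θ μ = z • (mono A θ μ * Eg A θ i))
    ?_ ?_ ?_ ?_ μ
  · exact ⟨1, by rw [mono_zero, mul_one, one_mul, one_smul]⟩
  · rintro a b ⟨z, hz⟩ ⟨w, hw⟩
    refine ⟨z * w, ?_⟩
    rw [mono_add, ← mul_assoc, hz, smul_mul_assoc, mul_assoc, hw, mul_smul_comm, smul_smul,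
      mul_assoc]
  · intro j
    have := mono_single_pos A θ j 1
    rw [pow_one, Nat.cast_one] at this
    rw [this]; exact ⟨_, g_ET j i⟩
  · intro j
    have := mono_single_neg A θ j 1
    rw [pow_one, Nat.cast_one] at this
    rw [this]; exact ⟨_, g_ETi j i⟩

include hF hE hg in
lemma SS_E (i : I) (y : Bth A θ) (hy : y ∈ SS Fmap Emap g) :
    Eg A θ i * y ∈ SS Fmap Emap g := by
  refine SS_red Fmap Emap g hF hg _ ?_ ?_ y hy
  · intro μ b
    obtain ⟨z, hz⟩ := g_Emono (A := A) i μ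
    rw [← mul_assoc, hz, smul_mul_assoc, mul_assoc, ← hE, ← map_mul]
    have := SS_mem' Fmap Emap g hg 1 μ (fgen A i * b)
    rw [map_one, one_mul] at this
    exact Submodule.smul_mem _ _ this
  · intro j y hy h
    rw [← mul_assoc, g_EF, add_mul, add_mul, smul_mul_assoc, mul_assoc]
    refine Submodule.add_mem _ (Submodule.add_mem _
      (Submodule.smul_mem _ _ (SS_F Fmap Emap g hF hg j _ h)) ?_) ?_
    · split_ifs
      · rwa [one_mul]
      · rw [zero_mul]; exact Submodule.zero_mem _
    · split_ifs
      · exact SS_T Fmap Emap g hF hg i y hy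
      · rw [zero_mul]; exact Submodule.zero_mem _

include hF hE hg in
lemma MM_surj : Function.Surjective (MM Fmap Emap g) := by
  intro x
  refine b_ind A θ (fun x => x ∈ SS Fmap Emap g) ?_ ?_ ?_ ?_ ?_ ?_ ?_ x
  · have := SS_mem' Fmap Emap g hg 1 0 1
    rwa [map_one, map_one, mono_zero, mul_one, mul_one] at this
  · intro a b ha hb; exact Submodule.add_mem _ ha hb
  · intro c a ha; exact Submodule.smul_mem _ _ ha
  · exact SS_E Fmap Emap g hF hE hg
  · exact SS_F Fmap Emap g hF hg
  · exact SS_T Fmap Emap g hF hg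
  · exact SS_Ti Fmap Emap g hF hg

end final
end BT


theorem stmt7 (A : I → I → ℤ) (θ : I → I) (hA : IsCartan A) (hθ : IsTheta A θ) :
    -- the structural maps exist …
    (∃ Fmap : Um A →ₐ[KK] Bth A θ, ∀ i, Fmap (fgen A i) = Fg A θ i) ∧
    (∃ Emap : Um A →ₐ[KK] Bth A θ, ∀ i, Emap (fgen A i) = Eg A θ i) ∧
    (∃ Tm : Orb θ → ℤ → Bth A θ, ∀ (i : I) (k : ℕ),
        Tm (Quot.mk _ i) (k : ℤ) = Tg A θ i ^ k ∧
        Tm (Quot.mk _ i) (-(k : ℤ)) = Tig A θ i ^ k) ∧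
    (∀ (Tm : Orb θ → ℤ → Bth A θ),
      (∀ (i : I) (k : ℕ), Tm (Quot.mk _ i) (k : ℤ) = Tg A θ i ^ k ∧
        Tm (Quot.mk _ i) (-(k : ℤ)) = Tig A θ i ^ k) →
      ∃ g : ((Orb θ →₀ ℤ) →₀ KK) →ₗ[KK] Bth A θ,
        ∀ (μ : Orb θ →₀ ℤ) (c : KK),
          g (Finsupp.single μ c) = c • (μ.support.toList.map fun o => Tm o (μ o)).prod) ∧
    -- … and the triangular-decomposition (multiplication) map
    -- `U_q^-(g) ⊗ K[T] ⊗ U_q^+(g) → B_θ(g)` is bijective.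
    (∀ (Fmap : Um A →ₐ[KK] Bth A θ) (Emap : Um A →ₐ[KK] Bth A θ)
        (Tm : Orb θ → ℤ → Bth A θ) (g : ((Orb θ →₀ ℤ) →₀ KK) →ₗ[KK] Bth A θ),
      (∀ i, Fmap (fgen A i) = Fg A θ i) →
      (∀ i, Emap (fgen A i) = Eg A θ i) →
      (∀ (i : I) (k : ℕ), Tm (Quot.mk _ i) (k : ℤ) = Tg A θ i ^ k ∧
        Tm (Quot.mk _ i) (-(k : ℤ)) = Tig A θ i ^ k) →
      (∀ (μ : Orb θ →₀ ℤ) (c : KK),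
        g (Finsupp.single μ c) = c • (μ.support.toList.map fun o => Tm o (μ o)).prod) →
      Function.Bijective
        ((LinearMap.mul' KK (Bth A θ)).comp
          (TensorProduct.map Fmap.toLinearMap
            ((LinearMap.mul' KK (Bth A θ)).comp
              (TensorProduct.map g Emap.toLinearMap))))) := by
  refine ⟨⟨BT.umLift A (Fg A θ) (BT.g_Fs A θ), BT.umLift_fgen A _ _⟩,
    ⟨BT.umLift A (Eg A θ) (BT.g_Es A θ), BT.umLift_fgen A _ _⟩,
    ⟨fun o n => BT.valH A θ (BT.gam A θ o ^ n),
      fun i k => ⟨BT.valH_pos A θ i k, BT.valH_neg A θ i k⟩⟩, ?_, ?_⟩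
  · intro Tm hTm
    exact ⟨Finsupp.linearCombination KK
      fun μ : Orb θ →₀ ℤ => (μ.support.toList.map fun o => Tm o (μ o)).prod,
      fun μ c => Finsupp.linearCombination_single KK c μ⟩
  · intro Fmap Emap Tm g hF hE hTm hg
    have hg' : ∀ μ c, g (Finsupp.single μ c) = c • BT.mono A θ μ := by
      intro μ c
      rw [hg, BT.mono_list A θ Tm hTm]
    exact ⟨BT.MM_inj hA hθ Fmap Emap g hF hE hg', BT.MM_surj Fmap Emap g hF hE hg'⟩
end
end

section
/- The following formulas are well defined and endow the free rank-one U_q^-(g)-modules U_q^-(g)φ'_λ and U_q^-(g)φ''_λ with structures of B_θ(g)-modules: on U_q^-(g)φ'_λ, T_i(aφ'_λ)=q^{(α_i,λ)}(Ad(t_it_{θ(i)})a)φ'_λ, E_i(aφ'_λ)=(e_i'a+q^{(α_i,λ)}Ad(t_i)(e^*_{θ(i)}a))φ'_λ, F_i(aφ'_λ)=(f_ia)φ'_λ; on U_q^-(g)φ''_λ, T_i(aφ''_λ)=q^{(α_i,λ)}(Ad(t_it_{θ(i)})a)φ''_λ, E_i(aφ''_λ)=(e_i'a)φ''_λ, F_i(aφ''_λ)=(f_ia+q^{(α_i,λ)}(Ad(t_i)a)f_{θ(i)})φ''_λ.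 Moreover there exists a unique B_θ(g)-linear map ψ: U_q^-(g)φ'_λ → U_q^-(g)φ''_λ with ψ(φ'_λ)=φ''_λ. -/
noncomputable section
open scoped BigOperators TensorProduct

variable {I : Type} [DecidableEq I]

def IsWt (A : I → I → ℤ) (ν : I →₀ ℕ) (a : Um A) : Prop :=
  a ∈ Submodule.span KK {x | ∃ L : List I, (∀ i, L.count i = ν i) ∧ x = (L.map (fgen A)).prod}

def EprimRel (A : I → I → ℤ) (E : I → Module.End KK (Um A)) : Prop :=
  (∀ i, E i 1 = 0) ∧
  ∀ i j (a : Um A), E i (fgen A j * a) =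
    (if i = j then a else 0) + qZ (-(A i j)) • (fgen A j * (E i a))

def EstarRel (A : I → I → ℤ) (Es : I → Module.End KK (Um A)) : Prop :=
  (∀ i, Es i 1 = 0) ∧
  ∀ i j (a : Um A), Es i (a * fgen A j) =
    (if i = j then a else 0) + qZ (-(A i j)) • ((Es i a) * fgen A j)

/-- `T` is the operator `Ad(t)` where `(t acting on weight ξ) = q^{⟨w,ξ⟩}`:
on an element of weight `-Σ ν_j α_j` it is multiplication by `q^{-Σ ν_j w j}`. -/
def IsAd (A : I → I → ℤ) (w : I → ℤ) (T : Module.End KK (Um A)) : Prop :=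
  ∀ (ν : I →₀ ℕ) (a : Um A), IsWt A ν a →
    T a = qZ (-(∑ j ∈ ν.support, (ν j : ℤ) * w j)) • a


set_option linter.unusedSectionVars false

namespace Aux

lemma qq_ne : qq ≠ 0 := RatFunc.X_ne_zero

lemma qZ_ne (n : ℤ) : qZ n ≠ 0 := zpow_ne_zero _ qq_ne

lemma qZ_add (a b : ℤ) : qZ (a + b) = qZ a * qZ b := zpow_add₀ qq_ne a b

lemma qZ_zero : qZ 0 = 1 := zpow_zero _

lemma qZ_pow (a : ℤ) (n : ℕ) : qZ a ^ n = qZ (a * n) := by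
  unfold qZ; rw [zpow_mul, zpow_natCast]

lemma qZ_ne_one_nat (n : ℕ) (h : n ≠ 0) : qq ^ n ≠ 1 := by
  intro h1
  have h2 : algebraMap (Polynomial ℚ) (RatFunc ℚ) (Polynomial.X ^ n) =
      algebraMap (Polynomial ℚ) (RatFunc ℚ) 1 := by
    simpa [qq] using h1
  have h3 := RatFunc.algebraMap_injective ℚ h2
  have h4 := congrArg Polynomial.natDegree h3
  simp at h4
  exact h h4

lemma qZ_ne_one (n : ℤ) (h : n ≠ 0) : qZ n ≠ 1 := by
  intro h1
  obtain ⟨m, rfl | rfl⟩ := Int.eq_nat_or_neg n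
  · exact qZ_ne_one_nat m (by simpa using h) (by simpa [qZ] using h1)
  · exact qZ_ne_one_nat m (by simpa using h) (by simpa [qZ] using h1)

lemma qdiff_ne (n : ℤ) (h : n ≠ 0) : qZ n - qZ (-n) ≠ 0 := by
  intro h1
  apply qZ_ne_one (n + n) (by omega)
  rw [qZ_add]
  have h2 : qZ n = qZ (-n) := sub_eq_zero.mp h1
  nth_rw 2 [h2]
  rw [← qZ_add]; simp [qZ_zero]

lemma qInt_eq (d : ℤ) (k : ℕ) : qInt d k = (qZ (d * k) - qZ (-(d * k))) / (qZ d - qZ (-d)) := rfl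

lemma qInt_ne (d : ℤ) (hd : d ≠ 0) (k : ℕ) (hk : k ≠ 0) : qInt d k ≠ 0 := by
  rw [qInt_eq]
  exact div_ne_zero (qdiff_ne _ (by simp [hd, hk])) (qdiff_ne _ hd)

lemma qInt_zero (d : ℤ) : qInt d 0 = 0 := by simp [qInt]

lemma qInt_add (d : ℤ) (k j : ℕ) :
    qInt d (k + j) = qZ (d * j) * qInt d k + qZ (-(d * k)) * qInt d j := by
  simp only [qInt_eq]
  rw [mul_div_assoc', mul_div_assoc', ← add_div]
  congr 1
  rw [mul_sub, mul_sub, ← qZ_add, ← qZ_add, ← qZ_add, ← qZ_add]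
  push_cast
  ring_nf

lemma qInt_neg (d : ℤ) (k : ℕ) : qInt (-d) k = qInt d k := by
  simp only [qInt_eq, neg_neg, neg_mul]
  rw [← neg_sub, ← neg_sub (qZ d), neg_div_neg_eq]

lemma qFact_neg (d : ℤ) (k : ℕ) : qFact (-d) k = qFact d k := by
  simp only [qFact, qInt_neg]

lemma qFact_succ (d : ℤ) (k : ℕ) : qFact d (k + 1) = qFact d k * qInt d (k + 1) := by
  simp only [qFact, Finset.prod_range_succ]

lemma qInt_mul_inv (d : ℤ) (hd : d ≠ 0) (k : ℕ) :
    qInt d (k + 1) * (qFact d (k + 1))⁻¹ = (qFact d k)⁻¹ := by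
  rw [qFact_succ, mul_inv, mul_comm, mul_assoc,
    inv_mul_cancel₀ (qInt_ne d hd (k + 1) (by omega)), mul_one]

section Key
variable {R : Type} [Ring R] [Algebra KK R]

def sG (d t : ℤ) (x z : R) (N : ℕ) : R :=
  ∑ p ∈ Finset.HasAntidiagonal.antidiagonal N,
    ((-1 : KK) ^ p.2 * qZ (d * (t - N + 1) * p.2) * (qFact d p.1)⁻¹ * (qFact d p.2)⁻¹) •
      (x ^ p.1 * z * x ^ p.2)

lemma sG_zero (d t : ℤ) (x z : R) : sG d t x z 0 = z := by
  simp [sG, qZ_zero, qFact]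

lemma sG_succ (d t : ℤ) (hd : d ≠ 0) (x z : R) (N : ℕ) :
    qInt d (N + 1) • sG d t x z (N + 1) =
      x * sG d t x z N - qZ (d * (t - 2 * N)) • (sG d t x z N * x) := by
  have key : qInt d (N + 1) • sG d t x z (N + 1) =
      (∑ p ∈ Finset.HasAntidiagonal.antidiagonal (N + 1),
        (qInt d p.1 * (qZ (d * p.2) * ((-1 : KK) ^ p.2 * qZ (d * (t - (N + 1 : ℕ) + 1) * p.2) *
          (qFact d p.1)⁻¹ * (qFact d p.2)⁻¹))) • (x ^ p.1 * z * x ^ p.2)) +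
      ∑ p ∈ Finset.HasAntidiagonal.antidiagonal (N + 1),
        (qInt d p.2 * (qZ (-(d * p.1)) * ((-1 : KK) ^ p.2 *
          qZ (d * (t - (N + 1 : ℕ) + 1) * p.2) *
          (qFact d p.1)⁻¹ * (qFact d p.2)⁻¹))) • (x ^ p.1 * z * x ^ p.2) := by
    rw [sG, Finset.smul_sum, ← Finset.sum_add_distrib]
    refine Finset.sum_congr rfl fun p hp => ?_
    rw [← Finset.HasAntidiagonal.mem_antidiagonal.mp hp, smul_smul, ← add_smul, qInt_add]
    congr 1
    ring
  rw [key, Finset.Nat.sum_antidiagonal_succ, Finset.Nat.sum_antidiagonal_succ']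
  simp only [qInt_zero, zero_mul, zero_smul, zero_add]
  rw [sG, Finset.mul_sum, Finset.sum_mul, Finset.smul_sum, sub_eq_add_neg (Finset.sum _ _),
    ← Finset.sum_neg_distrib]
  congr 1
  · refine Finset.sum_congr rfl fun p hp => ?_
    rw [mul_smul_comm, ← mul_assoc x, ← mul_assoc x, ← pow_succ']
    congr 1
    rw [← qInt_mul_inv d hd p.1]
    have : qZ (d * (t - N + 1) * p.2) =
        qZ (d * p.2) * qZ (d * (t - (N + 1 : ℕ) + 1) * p.2) := by
      rw [← qZ_add]; congr 1; push_cast; ring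
    rw [this]; ring
  · refine Finset.sum_congr rfl fun p hp => ?_
    rw [smul_mul_assoc, smul_smul, ← neg_smul, mul_assoc _ _ x, ← pow_succ]
    congr 1
    rw [← qInt_mul_inv d hd p.2]
    have hN := Finset.HasAntidiagonal.mem_antidiagonal.mp hp
    have : qZ (d * (t - 2 * N)) * qZ (d * (t - N + 1) * p.2) =
        qZ (-(d * p.1)) * qZ (d * (t - (N + 1 : ℕ) + 1) * (p.2 + 1 : ℕ)) := by
      rw [← qZ_add, ← qZ_add]; congr 1; rw [← hN]; push_cast; ring
    calc _ = -((-1 : KK) ^ p.2 * (qZ (-(d * p.1)) *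
          qZ (d * (t - (N + 1 : ℕ) + 1) * (p.2 + 1 : ℕ))) *
          (qFact d p.1)⁻¹ * (qInt d (p.2 + 1) * (qFact d (p.2 + 1))⁻¹)) := by
            rw [pow_succ]; push_cast; ring
      _ = _ := by rw [← this]; ring

lemma sG_add_right (d t : ℤ) (x z z' : R) (N : ℕ) :
    sG d t x (z + z') N = sG d t x z N + sG d t x z' N := by
  simp only [sG, mul_add, add_mul, smul_add, Finset.sum_add_distrib]

lemma smul_cancel {d : ℤ} (hd : d ≠ 0) {N : ℕ} {a b : R}
    (h : qInt d (N + 1) • a = qInt d (N + 1) • b) : a = b := by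
  have hq := qInt_ne d hd (N + 1) (by omega)
  have := congrArg (fun y => (qInt d (N + 1))⁻¹ • y) h
  simpa [smul_smul, inv_mul_cancel₀ hq] using this

/-- `y` `q`-commutes with `sG`. -/
lemma sG_qcomm (d t : ℤ) (hd : d ≠ 0) (x z y : R) (α β : KK)
    (hx : y * x = α • (x * y)) (hz : y * z = β • (z * y)) (N : ℕ) :
    y * sG d t x z N = (α ^ N * β) • (sG d t x z N * y) := by
  induction N with
  | zero => simpa [sG_zero] using hz
  | succ N ih =>
    apply smul_cancel hd (N := N)
    rw [← mul_smul_comm, smul_comm, ← smul_mul_assoc, sG_succ d t hd]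
    set G := sG d t x z N
    have h1 : y * (x * G) = (α ^ (N + 1) * β) • (x * G * y) := by
      rw [← mul_assoc, hx, smul_mul_assoc, mul_assoc, ih, mul_smul_comm, smul_smul, mul_assoc]
      congr 1; ring
    have h2 : y * (G * x) = (α ^ (N + 1) * β) • (G * x * y) := by
      rw [← mul_assoc, ih, smul_mul_assoc, mul_assoc, hx, mul_smul_comm, smul_smul, ← mul_assoc]
      congr 1; ring
    rw [mul_sub, h1, mul_smul_comm, h2, sub_mul, smul_sub, smul_mul_assoc, smul_comm]

lemma sG_qcomm' (d t : ℤ) (hd : d ≠ 0) (x z y : R) (α β : KK)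
    (hx : x * y = α • (y * x)) (hz : z * y = β • (y * z)) (N : ℕ) :
    sG d t x z N * y = (α ^ N * β) • (y * sG d t x z N) := by
  induction N with
  | zero => simpa [sG_zero] using hz
  | succ N ih =>
    apply smul_cancel hd (N := N)
    rw [← smul_mul_assoc, smul_comm, ← mul_smul_comm, sG_succ d t hd]
    set G := sG d t x z N
    have h1 : (x * G) * y = (α ^ (N + 1) * β) • (y * (x * G)) := by
      rw [mul_assoc, ih, mul_smul_comm, ← mul_assoc, hx, smul_mul_assoc, smul_smul, ← mul_assoc]
      congr 1; ring
    have h2 : (G * x) * y = (α ^ (N + 1) * β) • (y * (G * x)) := by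
      rw [mul_assoc, hx, mul_smul_comm, ← mul_assoc, ih, smul_mul_assoc, smul_smul, mul_assoc]
      congr 1; ring
    rw [sub_mul, h1, smul_mul_assoc, h2, mul_sub y, smul_sub, mul_smul_comm, smul_comm]

/-- adding `y` to `x` does not change `sG`. -/
lemma sG_add_left (d t : ℤ) (hd : d ≠ 0) (x z y : R)
    (hx : y * x = qZ (-(2 * d)) • (x * y)) (hz : y * z = qZ (d * t) • (z * y)) (N : ℕ) :
    sG d t (x + y) z N = sG d t x z N := by
  induction N with
  | zero => simp [sG_zero]
  | succ N ih =>
    apply smul_cancel hd (N := N)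
    rw [sG_succ d t hd, sG_succ d t hd, ih, add_mul, mul_add,
      sG_qcomm d t hd x z y _ _ hx hz, qZ_pow, ← qZ_add]
    have : -(2 * d) * (N : ℤ) + d * t = d * (t - 2 * N) := by ring
    rw [this, smul_add]
    abel

/-- twisting -/
lemma sG_twist (d t : ℤ) (hd : d ≠ 0) (r r' τ τ' : R) (α β : KK)
    (h1 : r * τ = α • (τ * r)) (h2 : r' * τ = β • (τ * r')) (h3 : r * τ' = β • (τ' * r))
    (h4 : τ * τ' = τ' * τ) (N : ℕ) :
    ∃ c : KK, sG d t (τ * r) (τ' * r') N = c • (τ ^ N * τ' * sG d t r r' N) := by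
  induction N with
  | zero => exact ⟨1, by simp [sG_zero]⟩
  | succ N ih =>
    obtain ⟨c, hc⟩ := ih
    refine ⟨c * (α ^ N * β), ?_⟩
    apply smul_cancel hd (N := N)
    rw [sG_succ d t hd, hc, smul_comm (qInt d (N + 1)), ← mul_smul_comm (qInt d (N + 1)),
      sG_succ d t hd]
    have hp : ∀ n : ℕ, r * τ ^ n = α ^ n • (τ ^ n * r) := by
      intro n
      induction n with
      | zero => simp
      | succ n ihn =>
        rw [pow_succ, ← mul_assoc, ihn, smul_mul_assoc, mul_assoc, h1, mul_smul_comm, smul_smul,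
          ← mul_assoc]
        rfl
    have hG := sG_qcomm' d t hd r r' τ α β h1 h2 N
    set G := sG d t r r' N
    have e1 : τ * r * (τ ^ N * τ' * G) = (α ^ N * β) • (τ ^ (N + 1) * τ' * (r * G)) := by
      calc _ = τ * (r * τ ^ N) * τ' * G := by simp only [mul_assoc]
        _ = α ^ N • (τ * τ ^ N * (r * τ') * G) := by
          rw [hp]; simp only [mul_assoc, mul_smul_comm, smul_mul_assoc]
        _ = _ := by
          rw [h3]; simp only [mul_assoc, mul_smul_comm, smul_mul_assoc, smul_smul, pow_succ']
    have e2 : τ ^ N * τ' * G * (τ * r) = (α ^ N * β) • (τ ^ (N + 1) * τ' * (G * r)) := by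
      calc _ = τ ^ N * τ' * (G * τ) * r := by simp only [mul_assoc]
        _ = (α ^ N * β) • (τ ^ N * (τ' * τ) * G * r) := by
          rw [hG]; simp only [mul_assoc, mul_smul_comm, smul_mul_assoc]
        _ = _ := by
          rw [← h4]; simp only [mul_assoc, pow_succ]
    rw [mul_smul_comm, e1, smul_mul_assoc, e2, mul_sub (τ ^ (N + 1) * τ'), smul_sub, mul_smul_comm, smul_smul,
      smul_smul, smul_smul, smul_smul]
    congr 2
    ring

end Key

section Serre
variable {R : Type} [Ring R] [Algebra KK R]

lemma serreElt_anti (A : I → I → ℤ) (x : I → R) (i j : I) :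
    serreElt A x i j = ∑ p ∈ Finset.HasAntidiagonal.antidiagonal (serreN A i j),
      ((-1 : KK) ^ p.1 * (qFact (A i i / 2) p.1)⁻¹ * (qFact (A i i / 2) p.2)⁻¹) •
      (x i ^ p.1 * x j * x i ^ p.2) := by
  rw [Finset.Nat.sum_antidiagonal_eq_sum_range_succ_mk]
  rfl

lemma serreElt_eq (A : I → I → ℤ) (x : I → R) (i j : I) (d : ℤ)
    (hq : ∀ k, qFact d k = qFact (A i i / 2) k) :
    serreElt A x i j = (-1 : KK) ^ (serreN A i j) •
      sG d ((serreN A i j : ℤ) - 1) (x i) (x j) (serreN A i j) := by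
  rw [serreElt_anti, sG, Finset.smul_sum]
  refine Finset.sum_congr rfl fun p hp => ?_
  have hN := Finset.HasAntidiagonal.mem_antidiagonal.mp hp
  rw [smul_smul, hq, hq]
  have h0 : d * ((serreN A i j : ℤ) - 1 - (serreN A i j : ℤ) + 1) * (p.2 : ℤ) = 0 := by ring
  rw [h0, qZ_zero, ← hN]
  congr 1
  have h1 : ((-1 : KK) ^ p.2) * (-1) ^ p.2 = 1 := by
    rw [← mul_pow]; simp
  rw [pow_add]
  linear_combination (-(-1 : KK) ^ p.1 * (qFact (A i i / 2) p.1)⁻¹ * (qFact (A i i / 2) p.2)⁻¹) * h1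

lemma serreN_spec {A : I → I → ℤ} (hA : IsCartan A) {i j : I} (h : i ≠ j) :
    1 ≤ serreN A i j ∧ A i i / 2 ≠ 0 ∧ A i i = 2 * (A i i / 2) ∧
    -A i j = (A i i / 2) * ((serreN A i j : ℤ) - 1) := by
  obtain ⟨_, h2, h3, h4, h5⟩ := hA
  obtain ⟨d, hd⟩ := h3 i
  obtain ⟨c, hc⟩ := h5 i j
  have hp := h2 i
  have hn := h4 i j h
  have hd2 : A i i / 2 = d := by omega
  have hdp : 0 < d := by omega
  have hq : 2 * A i j / A i i = c := by
    rw [hc]; exact Int.mul_ediv_cancel_left _ (by omega)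
  have hcn : c ≤ 0 := by
    by_contra hcc
    push Not at hcc
    have : 0 < A i i * c := mul_pos hp hcc
    omega
  have hs : (serreN A i j : ℤ) = 1 - c := by
    unfold serreN; rw [hq]; omega
  refine ⟨by omega, by omega, by omega, ?_⟩
  rw [hd2, hs]
  rw [hd] at hc
  have : A i j = d * c := by linarith
  rw [this]; ring

lemma serreElt_add {A : I → I → ℤ} (hA : IsCartan A) (x y : I → R) (i j : I) (h : i ≠ j)
    (hxy : ∀ a b, y a * x b = qZ (-A a b) • (x b * y a)) :
    serreElt A (fun k => x k + y k) i j = serreElt A x i j + serreElt A y i j := by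
  obtain ⟨hb, hd, hd2, hij⟩ := serreN_spec hA h
  have hsym := hA.1
  have h1 : serreElt A (fun k => x k + y k) i j =
      (-1 : KK) ^ (serreN A i j) •
        sG (A i i / 2) ((serreN A i j : ℤ) - 1) (x i + y i) (x j) (serreN A i j) +
      (-1 : KK) ^ (serreN A i j) •
        sG (-(A i i / 2)) ((serreN A i j : ℤ) - 1) (x i + y i) (y j) (serreN A i j) := by
    have e1 := serreElt_eq A (fun k => if k = i then x i + y i else x j) i j _ (fun k => rfl)
    have e2 := serreElt_eq A (fun k => if k = i then x i + y i else y j) i j _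
      (fun k => qFact_neg (A i i / 2) k)
    simp only [if_true, if_neg h.symm] at e1 e2
    rw [← e1, ← e2]
    simp only [serreElt, if_true, if_neg h.symm, mul_add, add_mul, smul_add,
      Finset.sum_add_distrib]
  rw [h1, serreElt_eq A x i j _ (fun k => rfl), serreElt_eq A y i j _
      (fun k => qFact_neg (A i i / 2) k), sG_add_left _ _ hd, add_comm (x i),
      sG_add_left _ _ (neg_ne_zero.mpr hd)]
  · have := hxy i i
    rw [this, smul_smul, ← qZ_add]
    have e : -(2 * -(A i i / 2)) + -A i i = 0 := by omega
    rw [e, qZ_zero, one_smul]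
  · rw [hxy j i, smul_smul, ← qZ_add, neg_mul, ← hij, hsym j i]
    simp [qZ_zero]
  · rw [hxy, ← hd2]
  · rw [hxy, ← hij]

lemma serreElt_twist {A : I → I → ℤ} (hA : IsCartan A) (r τ : I → R) (i j : I) (h : i ≠ j)
    (c : I → I → KK) (hc : c i j = c j i) (hrt : ∀ a b, r a * τ b = c a b • (τ b * r a))
    (htt : ∀ a b, τ a * τ b = τ b * τ a) (h0 : serreElt A r i j = 0) :
    serreElt A (fun k => τ k * r k) i j = 0 := by
  obtain ⟨hb, hd, hd2, hij⟩ := serreN_spec hA h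
  rw [serreElt_eq A _ i j _ (fun k => rfl)] at h0 ⊢
  have h0' : sG (A i i / 2) ((serreN A i j : ℤ) - 1) (r i) (r j) (serreN A i j) = 0 := by
    have h2 : ((-1 : KK) ^ serreN A i j) ≠ 0 := pow_ne_zero _ (by simp)
    exact (smul_eq_zero_iff_right h2).mp h0
  obtain ⟨k, hk⟩ := sG_twist (A i i / 2) ((serreN A i j : ℤ) - 1) hd (r i) (r j) (τ i) (τ j)
    (c i i) (c i j) (hrt i i) (by rw [hrt, hc]) (hrt i j) (htt i j) (serreN A i j)
  rw [hk, h0']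
  simp

lemma serreElt_smul (A : I → I → ℤ) (x : I → R) (c : I → KK) (i j : I) :
    serreElt A (fun k => c k • x k) i j = (c i ^ serreN A i j * c j) • serreElt A x i j := by
  rw [serreElt_anti, serreElt_anti, Finset.smul_sum]
  refine Finset.sum_congr rfl fun p hp => ?_
  have hN := Finset.HasAntidiagonal.mem_antidiagonal.mp hp
  simp only [smul_pow, smul_mul_assoc, mul_smul_comm, smul_smul]
  congr 1
  rw [← hN, pow_add]; ring

lemma serreElt_map {R' : Type} [Ring R'] [Algebra KK R'] (A : I → I → ℤ) (φ : R →ₐ[KK] R')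
    (x : I → R) (i j : I) : φ (serreElt A x i j) = serreElt A (fun k => φ (x k)) i j := by
  simp only [serreElt, map_sum, map_smul, map_mul, map_pow]

lemma serreElt_theta (A : I → I → ℤ) (θ : I → I) (hθ : IsTheta A θ) (x : I → R) (i j : I) :
    serreElt A (fun k => x (θ k)) i j = serreElt A x (θ i) (θ j) := by
  simp only [serreElt, serreN, hθ.2]

lemma serreElt_mulLeft (A : I → I → ℤ) (x : I → R) (i j : I) :
    serreElt A (fun k => LinearMap.mulLeft KK (x k)) i j =
      LinearMap.mulLeft KK (serreElt A x i j) :=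
  (serreElt_map A (Algebra.lmul KK R) x i j).symm

lemma serreElt_mulRight (A : I → I → ℤ) (x : I → R) (i j : I) (h : serreElt A x i j = 0) :
    serreElt A (fun k => LinearMap.mulRight KK (x k)) i j = 0 := by
  have : serreElt A (fun k => LinearMap.mulRight KK (x k)) i j =
      (-1 : KK) ^ serreN A i j • LinearMap.mulRight KK (serreElt A x i j) := by
    ext a
    rw [serreElt_anti, serreElt_anti, ← Finset.Nat.sum_antidiagonal_swap]
    simp only [LinearMap.smul_apply, LinearMap.mulRight_apply, LinearMap.sum_apply,
      Finset.mul_sum, Finset.smul_sum, Module.End.mul_apply, LinearMap.pow_mulRight,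
      mul_smul_comm, smul_smul, Prod.fst_swap, Prod.snd_swap]
    refine Finset.sum_congr rfl fun p hp => ?_
    have hN := Finset.HasAntidiagonal.mem_antidiagonal.mp hp
    rw [← hN, show a * x i ^ p.1 * x j * x i ^ p.2 = a * (x i ^ p.1 * x j * x i ^ p.2) by
      simp only [mul_assoc]]
    congr 1
    have h1 : ((-1 : KK) ^ p.1) * (-1) ^ p.1 = 1 := by
      rw [← mul_pow]; simp
    rw [pow_add]
    linear_combination (-(-1 : KK) ^ p.2 * (qFact (A i i / 2) p.1)⁻¹ *
      (qFact (A i i / 2) p.2)⁻¹) * h1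
  rw [this, h]
  ext; simp

lemma serreElt_intertwine {V W : Type} [AddCommGroup V] [Module KK V] [AddCommGroup W]
    [Module KK W] (A : I → I → ℤ) (P : V →ₗ[KK] W) (e : I → Module.End KK W)
    (M : I → Module.End KK V) (h : ∀ k v, e k (P v) = P (M k v)) (i j : I) (v : V) :
    serreElt A e i j (P v) = P (serreElt A M i j v) := by
  have hp : ∀ k (n : ℕ) v, (e k ^ n) (P v) = P ((M k ^ n) v) := by
    intro k n
    induction n with
    | zero => intro v; simp
    | succ n ih => intro v; rw [pow_succ, pow_succ, Module.End.mul_apply, h, ih]; rfl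
  simp only [serreElt, LinearMap.sum_apply, LinearMap.smul_apply, Module.End.mul_apply, hp, h,
    map_sum, map_smul]

/-- `e'`-type operators satisfy the Serre relations -/
lemma eprim_serre {V : Type} [AddCommGroup V] [Module KK V] {A : I → I → ℤ} (hA : IsCartan A)
    (one : V) (P : I → V →ₗ[KK] V)
    (hind : ∀ S : Submodule KK V, one ∈ S → (∀ k a, a ∈ S → P k a ∈ S) → ∀ a, a ∈ S)
    (e : I → Module.End KK V) (h1 : ∀ i, e i one = 0)
    (he : ∀ i j a, e i (P j a) = (if i = j then (1 : KK) else 0) • a + qZ (-A i j) • P j (e i a))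
    (i j : I) (h : i ≠ j) : serreElt A e i j = 0 := by
  obtain ⟨hb, hd, hd2, hij⟩ := serreN_spec hA h
  ext a
  refine hind (LinearMap.ker (serreElt A e i j)) ?_ ?_ a
  · rw [LinearMap.mem_ker]
    have := serreElt_intertwine A (LinearMap.toSpanSingleton KK V one) e
      (fun _ => (0 : KK) • 0) (by intro k v; simp [h1]) i j 1
    rw [serreElt_smul] at this
    simpa using this
  · intro k a ha
    rw [LinearMap.mem_ker] at ha ⊢
    let L : I → Module.End KK (V × V) := fun i => LinearMap.prodMap (qZ (-A i k) • e i) (e i)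
    let N : Module.End KK (V × V) := LinearMap.inr KK V V ∘ₗ LinearMap.fst KK V V
    let Y : I → Module.End KK (V × V) := fun i => (if i = k then (1 : KK) else 0) • N
    let Q : V × V →ₗ[KK] V := LinearMap.coprod (P k) LinearMap.id
    have t1 := serreElt_intertwine A Q e (fun i => L i + Y i) (by
      rintro m ⟨u, v⟩
      simp only [Q, L, Y, N, LinearMap.coprod_apply, LinearMap.id_apply, map_add, he,
        LinearMap.add_apply, LinearMap.prodMap_apply, LinearMap.smul_apply, LinearMap.comp_apply,
        LinearMap.fst_apply, LinearMap.inr_apply, map_smul, map_zero, zero_add]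
      abel) i j (a, 0)
    have t2 := serreElt_add hA L Y i j h (by
      intro m n
      ext u <;> by_cases hm : m = k <;>
        simp [L, Y, N, Module.End.mul_apply, hm, hA.1])
    have t3 : serreElt A Y i j = 0 := by
      simp only [Y]
      rw [serreElt_smul]
      have : ((if i = k then (1 : KK) else 0) ^ serreN A i j * if j = k then (1 : KK) else 0)
          = 0 := by
        by_cases hj : j = k
        · have hi : i ≠ k := by rw [← hj]; exact h
          rw [if_neg hi, zero_pow (by omega), zero_mul]
        · rw [if_neg hj, mul_zero]
      rw [this, zero_smul]
    have t4 := serreElt_intertwine A (LinearMap.inl KK V V) L (fun i => qZ (-A i k) • e i) (by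
      intro m v; simp [L]) i j a
    rw [serreElt_smul, LinearMap.smul_apply, ha, smul_zero, map_zero] at t4
    rw [t2, t3, add_zero] at t1
    have e1 : Q (a, 0) = P k a := by simp [Q]
    rw [LinearMap.inl_apply] at t4
    rw [e1, t4, map_zero] at t1
    exact t1

end Serre

/-- Kronecker delta -/
def dl (i j : I) : KK := if i = j then 1 else 0

/-- the generic setting: an algebra with generators, and the diagonal automorphisms -/
structure Core {U : Type} [Ring U] [Algebra KK U] (A : I → I → ℤ) (f : I → U)
    (Ad : (I → ℤ) → U →ₐ[KK] U) : Prop where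
  serre : ∀ i j, i ≠ j → serreElt A f i j = 0
  hl : ∀ S : Submodule KK U, 1 ∈ S → (∀ k a, a ∈ S → f k * a ∈ S) → ∀ a, a ∈ S
  hr : ∀ S : Submodule KK U, 1 ∈ S → (∀ k a, a ∈ S → a * f k ∈ S) → ∀ a, a ∈ S
  ad : ∀ w j, Ad w (f j) = qZ (-w j) • f j

section CoreSec
variable {U : Type} [Ring U] [Algebra KK U] {A : I → I → ℤ} {f : I → U}
  {Ad : (I → ℤ) → U →ₐ[KK] U}

lemma Core.extl (H : Core A f Ad) {V : Type} [AddCommGroup V] [Module KK V] (φ ψ : U →ₗ[KK] V)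
    (h1 : φ 1 = ψ 1) (h : ∀ k a, φ a = ψ a → φ (f k * a) = ψ (f k * a)) (a : U) : φ a = ψ a :=
  H.hl (LinearMap.eqLocus φ ψ) h1 h a

lemma Core.extr (H : Core A f Ad) {V : Type} [AddCommGroup V] [Module KK V] (φ ψ : U →ₗ[KK] V)
    (h1 : φ 1 = ψ 1) (h : ∀ k a, φ a = ψ a → φ (a * f k) = ψ (a * f k)) (a : U) : φ a = ψ a :=
  H.hr (LinearMap.eqLocus φ ψ) h1 h a

lemma Core.ad_ad (H : Core A f Ad) (w w' : I → ℤ) (a : U) :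
    Ad w (Ad w' a) = Ad (w + w') a := by
  refine H.extl ((Ad w).toLinearMap ∘ₗ (Ad w').toLinearMap) (Ad (w + w')).toLinearMap ?_ ?_ a
  · simp
  · intro k a h
    simp only [LinearMap.comp_apply, AlgHom.toLinearMap_apply] at h ⊢
    rw [map_mul, map_mul, map_mul, h, H.ad, H.ad, map_smul, H.ad, smul_smul, ← qZ_add]
    congr 3
    simp only [Pi.add_apply]; ring

lemma Core.ad_zero (H : Core A f Ad) (a : U) : Ad 0 a = a := by
  refine H.extl (Ad 0).toLinearMap LinearMap.id ?_ ?_ a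
  · simp
  · intro k a h
    simp only [AlgHom.toLinearMap_apply, LinearMap.id_apply] at h ⊢
    rw [map_mul, h, H.ad]
    simp [qZ_zero]

lemma Core.ad_mul (H : Core A f Ad) (w : I → ℤ) (k : I) (a : U) :
    Ad w (f k * a) = qZ (-w k) • (f k * Ad w a) := by
  rw [map_mul, H.ad, smul_mul_assoc]

lemma Core.ad_mul' (H : Core A f Ad) (w : I → ℤ) (k : I) (a : U) :
    Ad w (a * f k) = qZ (-w k) • (Ad w a * f k) := by
  rw [map_mul, H.ad, mul_smul_comm]

variable {E Es : I → Module.End KK U}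

/-- properties of the `e_i'` -/
structure EP (A : I → I → ℤ) (f : I → U) (E : I → Module.End KK U) : Prop where
  one : ∀ i, E i 1 = 0
  mul : ∀ i j a, E i (f j * a) = dl i j • a + qZ (-A i j) • (f j * E i a)

structure EPs (A : I → I → ℤ) (f : I → U) (Es : I → Module.End KK U) : Prop where
  one : ∀ i, Es i 1 = 0
  mul : ∀ i j a, Es i (a * f j) = dl i j • a + qZ (-A i j) • (Es i a * f j)

lemma E_right (H : Core A f Ad) (hE : EP A f E) (i j : I) (a : U) :
    E i (a * f j) = E i a * f j + dl i j • Ad (A i) a := by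
  refine H.extl (E i ∘ₗ LinearMap.mulRight KK (f j))
    (LinearMap.mulRight KK (f j) ∘ₗ E i + dl i j • (Ad (A i)).toLinearMap) ?_ ?_ a
  · have := hE.mul i j 1
    simpa [hE.one] using this
  · intro k a h
    simp only [LinearMap.comp_apply, LinearMap.add_apply, LinearMap.smul_apply,
      LinearMap.mulRight_apply, AlgHom.toLinearMap_apply] at h ⊢
    rw [mul_assoc, hE.mul, h, hE.mul, H.ad_mul]
    simp only [mul_add, add_mul, smul_add, smul_mul_assoc, mul_smul_comm, mul_assoc]
    simp only [smul_smul, mul_comm]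
    abel

lemma Es_left (H : Core A f Ad) (hEs : EPs A f Es) (i j : I) (a : U) :
    Es i (f j * a) = f j * Es i a + dl i j • Ad (A i) a := by
  refine H.extr (Es i ∘ₗ LinearMap.mulLeft KK (f j))
    (LinearMap.mulLeft KK (f j) ∘ₗ Es i + dl i j • (Ad (A i)).toLinearMap) ?_ ?_ a
  · have := hEs.mul i j 1
    simpa [hEs.one] using this
  · intro k a h
    simp only [LinearMap.comp_apply, LinearMap.add_apply, LinearMap.smul_apply,
      LinearMap.mulLeft_apply, AlgHom.toLinearMap_apply] at h ⊢
    rw [← mul_assoc, hEs.mul, h, hEs.mul, H.ad_mul']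
    simp only [mul_add, add_mul, smul_add, smul_mul_assoc, mul_smul_comm, mul_assoc]
    simp only [smul_smul, mul_comm]
    abel

lemma dl_qZ (w : I → ℤ) (i k : I) : dl i k = dl i k * (qZ (w i) * qZ (-w k)) := by
  unfold dl
  split_ifs with h
  · subst h; rw [← qZ_add]; simp [qZ_zero]
  · simp

lemma Ad_E (H : Core A f Ad) (hE : EP A f E) (w : I → ℤ) (i : I) (a : U) :
    Ad w (E i a) = qZ (w i) • E i (Ad w a) := by
  refine H.extl ((Ad w).toLinearMap ∘ₗ E i) (qZ (w i) • (E i ∘ₗ (Ad w).toLinearMap)) ?_ ?_ a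
  · simp [hE.one]
  · intro k a h
    simp only [LinearMap.comp_apply, LinearMap.smul_apply, AlgHom.toLinearMap_apply] at h ⊢
    rw [hE.mul, H.ad_mul, map_add, map_smul, map_smul, H.ad_mul, h, map_smul, hE.mul]
    nth_rw 1 [dl_qZ w i k]
    simp only [smul_add, mul_smul_comm]
    simp only [smul_smul, mul_comm, mul_left_comm]

lemma Ad_Es (H : Core A f Ad) (hEs : EPs A f Es) (w : I → ℤ) (i : I) (a : U) :
    Ad w (Es i a) = qZ (w i) • Es i (Ad w a) := by
  refine H.extr ((Ad w).toLinearMap ∘ₗ Es i) (qZ (w i) • (Es i ∘ₗ (Ad w).toLinearMap)) ?_ ?_ a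
  · simp [hEs.one]
  · intro k a h
    simp only [LinearMap.comp_apply, LinearMap.smul_apply, AlgHom.toLinearMap_apply] at h ⊢
    rw [hEs.mul, H.ad_mul', map_add, map_smul, map_smul, H.ad_mul', h, map_smul, hEs.mul]
    nth_rw 1 [dl_qZ w i k]
    simp only [smul_add, smul_mul_assoc]
    simp only [smul_smul, mul_comm, mul_left_comm]

lemma E_Es (hA : IsCartan A) (H : Core A f Ad) (hE : EP A f E) (hEs : EPs A f Es)
    (i j : I) (a : U) :
    E i (Es j a) = Es j (E i a) := by
  refine H.extl (E i ∘ₗ Es j) (Es j ∘ₗ E i) ?_ ?_ a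
  · simp [hE.one, hEs.one]
  · intro k a h
    simp only [LinearMap.comp_apply] at h ⊢
    rw [Es_left H hEs, hE.mul, map_add, map_add, map_smul, map_smul, map_smul, hE.mul, h,
      Es_left H hEs, Ad_E H hE]
    have : dl j k • E i (Ad (A j) a) =
        (dl j k * (qZ (-A i k) * qZ (A j i))) • E i (Ad (A j) a) := by
      congr 1
      unfold dl
      split_ifs with h
      · subst h; rw [← qZ_add, hA.1 i j]; simp [qZ_zero]
      · simp
    rw [this]
    simp only [smul_add, smul_smul, mul_comm, mul_left_comm, mul_assoc]
    abel

lemma E_serre (hA : IsCartan A) (H : Core A f Ad) (hE : EP A f E) (i j : I) (h : i ≠ j) :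
    serreElt A E i j = 0 :=
  eprim_serre hA (1 : U) (fun k => LinearMap.mulLeft KK (f k)) H.hl E hE.one
    (fun i j a => hE.mul i j a) i j h

lemma Es_serre (hA : IsCartan A) (H : Core A f Ad) (hEs : EPs A f Es) (i j : I) (h : i ≠ j) :
    serreElt A Es i j = 0 :=
  eprim_serre hA (1 : U) (fun k => LinearMap.mulRight KK (f k)) H.hr Es hEs.one
    (fun i j a => hEs.mul i j a) i j h

/-- the operators -/
def opT (Ad : (I → ℤ) → U →ₐ[KK] U) (lam : I → ℤ) (i : I) : Module.End KK U :=
  qZ (lam i) • (Ad (A i)).toLinearMap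

lemma opT_comm (H : Core A f Ad) (lam : I → ℤ) (i j : I) :
    opT (A := A) Ad lam i * opT (A := A) Ad lam j =
      opT (A := A) Ad lam j * opT (A := A) Ad lam i := by
  ext a
  simp only [opT, Module.End.mul_apply, LinearMap.smul_apply, AlgHom.toLinearMap_apply, map_smul,
    H.ad_ad]
  rw [add_comm (A i), smul_comm]

lemma serre_E1 (hA : IsCartan A) {θ : I → I} (hθ : IsTheta A θ) (H : Core A f Ad) (hE : EP A f E)
    (hEs : EPs A f Es) (lam : I → ℤ) (i j : I) (h : i ≠ j) :
    serreElt A (fun k => E k + opT (A := A) Ad lam k * Es (θ k)) i j = 0 := by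
  have hsw : (fun k => E k + opT (A := A) Ad lam k * Es (θ k)) =
      fun k => opT (A := A) Ad lam k * Es (θ k) + E k := by
    funext k; rw [add_comm]
  have hinj : θ i ≠ θ j := fun hh => h (by rw [← hθ.1 i, hh, hθ.1])
  rw [hsw, serreElt_add hA _ _ i j h, E_serre hA H hE i j h, add_zero]
  · refine serreElt_twist hA (fun k => Es (θ k)) _ i j h (fun a b => qZ (-A b (θ a))) ?_ ?_
      (opT_comm H lam) ?_
    · have := hθ.2 (θ j) i
      rw [hθ.1] at this
      simp only [this, hA.1 (θ j) i]
    · intro a b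
      ext u
      simp only [opT, Module.End.mul_apply, LinearMap.smul_apply, AlgHom.toLinearMap_apply,
        map_smul, Ad_Es H hEs, smul_smul]
      congr 1
      rw [mul_left_comm, ← qZ_add]
      simp [qZ_zero]
    · rw [serreElt_theta A θ hθ Es]
      exact Es_serre hA H hEs _ _ hinj
  · intro a b
    ext u
    simp only [opT, Module.End.mul_apply, LinearMap.smul_apply, AlgHom.toLinearMap_apply,
        map_smul, Ad_E H hE, ← E_Es hA H hE hEs, smul_smul]
    congr 1
    rw [hA.1 a b, mul_left_comm, ← qZ_add]
    simp [qZ_zero]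

lemma serre_F2 (hA : IsCartan A) {θ : I → I} (hθ : IsTheta A θ) (H : Core A f Ad)
    (lam : I → ℤ) (i j : I) (h : i ≠ j) :
    serreElt A (fun k => LinearMap.mulLeft KK (f k) +
      opT (A := A) Ad lam k * (qZ (A k (θ k)) • LinearMap.mulRight KK (f (θ k)))) i j = 0 := by
  have hinj : θ i ≠ θ j := fun hh => h (by rw [← hθ.1 i, hh, hθ.1])
  rw [serreElt_add hA _ _ i j h, serreElt_mulLeft, H.serre i j h]
  · have : serreElt A (fun k => opT (A := A) Ad lam k *
        (qZ (A k (θ k)) • LinearMap.mulRight KK (f (θ k)))) i j = 0 := by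
      refine serreElt_twist hA (fun k => qZ (A k (θ k)) • LinearMap.mulRight KK (f (θ k))) _ i j h
        (fun a b => qZ (A b (θ a))) ?_ ?_
        (opT_comm H lam) ?_
      · have := hθ.2 (θ j) i
        rw [hθ.1] at this
        simp only [this, hA.1 (θ j) i]
      · intro a b
        ext u
        simp only [opT, Module.End.mul_apply, LinearMap.smul_apply, AlgHom.toLinearMap_apply,
          map_smul, LinearMap.mulRight_apply, H.ad_mul', smul_smul, smul_mul_assoc]
        congr 1
        have : qZ (A b (θ a)) * qZ (-A b (θ a)) = 1 := by rw [← qZ_add]; simp [qZ_zero]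
        linear_combination (-qZ (A a (θ a)) * qZ (lam b)) * this
      · rw [serreElt_smul, serreElt_theta A θ hθ (fun k => LinearMap.mulRight KK (f k)),
          serreElt_mulRight A f _ _ (H.serre _ _ hinj), smul_zero]
    rw [this, add_zero]
    ext; simp
  · intro a b
    ext u
    simp only [opT, Module.End.mul_apply, LinearMap.smul_apply, AlgHom.toLinearMap_apply,
        map_smul, LinearMap.mulRight_apply, LinearMap.mulLeft_apply, H.ad_mul, H.ad_mul', smul_smul,
        mul_smul_comm, mul_assoc]
    congr 1
    ring

end CoreSec

section Build

lemma buildRep {V : Type} [AddCommGroup V] [Module KK V] (A : I → I → ℤ) (θ : I → I)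
    (T Ti E F : I → Module.End KK V)
    (h1 : ∀ i, T i * Ti i = 1) (h2 : ∀ i, Ti i * T i = 1) (h3 : ∀ i j, T i * T j = T j * T i)
    (h4 : ∀ i, T (θ i) = T i) (h5 : ∀ i, Ti (θ i) = Ti i)
    (h6 : ∀ i j, T i * E j = qZ (A i j + A (θ i) j) • (E j * T i))
    (h7 : ∀ i j, T i * F j = qZ (-(A i j + A (θ i) j)) • (F j * T i))
    (h8 : ∀ i j, E i * F j = qZ (-(A i j)) • (F j * E i) + dl i j • 1 + dl (θ i) j • T i)
    (h9 : ∀ i j, i ≠ j → serreElt A E i j = 0) (h10 : ∀ i j, i ≠ j → serreElt A F i j = 0) :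
    ∃ ρ : Bth A θ →ₐ[KK] Module.End KK V,
      (∀ i, ρ (Tg A θ i) = T i) ∧ (∀ i, ρ (Eg A θ i) = E i) ∧ (∀ i, ρ (Fg A θ i) = F i) := by
  let g : BGen I → Module.End KK V := fun x =>
    match x with
    | BGen.E i => E i
    | BGen.F i => F i
    | BGen.T i => T i
    | BGen.Ti i => Ti i
  let φ : FreeAlgebra KK (BGen I) →ₐ[KK] Module.End KK V := FreeAlgebra.lift KK g
  have pE : ∀ i, φ (bE i) = E i := fun i => FreeAlgebra.lift_ι_apply g _
  have pF : ∀ i, φ (bF i) = F i := fun i => FreeAlgebra.lift_ι_apply g _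
  have pT : ∀ i, φ (bT i) = T i := fun i => FreeAlgebra.lift_ι_apply g _
  have pTi : ∀ i, φ (bTi i) = Ti i := fun i => FreeAlgebra.lift_ι_apply g _
  have hφ : ∀ ⦃x y⦄, BRel A θ x y → φ x = φ y := by
    intro x y hxy
    cases hxy with
    | T_inv_right i => rw [map_mul, pT, pTi, h1, map_one]
    | T_inv_left i => rw [map_mul, pT, pTi, h2, map_one]
    | T_comm i j => rw [map_mul, map_mul, pT, pT, h3]
    | T_theta i => rw [pT, pT, h4]
    | Ti_theta i => rw [pTi, pTi, h5]
    | TE i j => rw [map_mul, map_smul, map_mul, pT, pE, h6]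
    | TF i j => rw [map_mul, map_smul, map_mul, pT, pF, h7]
    | EF i j =>
      rw [map_mul, map_add, map_add, map_smul, map_mul, pE, pF, h8]
      congr 1
      · congr 1
        unfold dl; split_ifs <;> simp
      · unfold dl; split_ifs <;> simp [pT]
    | Eserre i j h => rw [serreElt_map, map_zero]; simp only [pE]; exact h9 i j h
    | Fserre i j h => rw [serreElt_map, map_zero]; simp only [pF]; exact h10 i j h
  refine ⟨RingQuot.liftAlgHom KK ⟨φ, hφ⟩, ?_, ?_, ?_⟩
  · intro i; rw [Tg, RingQuot.liftAlgHom_mkAlgHom_apply, pT]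
  · intro i; rw [Eg, RingQuot.liftAlgHom_mkAlgHom_apply, pE]
  · intro i; rw [Fg, RingQuot.liftAlgHom_mkAlgHom_apply, pF]

lemma fgen_serre (A : I → I → ℤ) (i j : I) (h : i ≠ j) : serreElt A (fgen A) i j = 0 := by
  have := RingQuot.mkAlgHom_rel KK (SerreRel.serre (A := A) i j h)
  rw [serreElt_map, map_zero] at this
  exact this

lemma um_lift {R : Type} [Ring R] [Algebra KK R] (A : I → I → ℤ) (x : I → R)
    (hx : ∀ i j, i ≠ j → serreElt A x i j = 0) :
    ∃ Φ : Um A →ₐ[KK] R, ∀ i, Φ (fgen A i) = x i := by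
  let φ : FreeAlgebra KK I →ₐ[KK] R := FreeAlgebra.lift KK x
  have p : ∀ i, φ (FreeAlgebra.ι KK i) = x i := fun i => FreeAlgebra.lift_ι_apply x _
  have hφ : ∀ ⦃a b⦄, SerreRel A a b → φ a = φ b := by
    intro a b hab
    cases hab with
    | serre i j h => rw [serreElt_map, map_zero]; simp only [p]; exact hx i j h
  exact ⟨RingQuot.liftAlgHom KK ⟨φ, hφ⟩, fun i => by
    rw [fgen, RingQuot.liftAlgHom_mkAlgHom_apply, p]⟩

lemma um_hl (A : I → I → ℤ) (S : Submodule KK (Um A)) (h1 : 1 ∈ S)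
    (h : ∀ k a, a ∈ S → fgen A k * a ∈ S) (a : Um A) : a ∈ S := by
  obtain ⟨x, rfl⟩ := RingQuot.mkAlgHom_surjective KK (SerreRel A) a
  have key : ∀ b ∈ S, RingQuot.mkAlgHom KK (SerreRel A) x * b ∈ S := by
    induction x using FreeAlgebra.induction with
    | grade0 r =>
      intro b hb
      rw [AlgHom.commutes, ← Algebra.smul_def]
      exact S.smul_mem _ hb
    | grade1 k => intro b hb; exact h k b hb
    | mul x y hx hy => intro b hb; rw [map_mul, mul_assoc]; exact hx _ (hy _ hb)
    | add x y hx hy => intro b hb; rw [map_add, add_mul]; exact S.add_mem (hx _ hb) (hy _ hb)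
  simpa using key 1 h1

lemma um_hr (A : I → I → ℤ) (S : Submodule KK (Um A)) (h1 : 1 ∈ S)
    (h : ∀ k a, a ∈ S → a * fgen A k ∈ S) (a : Um A) : a ∈ S := by
  obtain ⟨x, rfl⟩ := RingQuot.mkAlgHom_surjective KK (SerreRel A) a
  have key : ∀ b ∈ S, b * RingQuot.mkAlgHom KK (SerreRel A) x ∈ S := by
    induction x using FreeAlgebra.induction with
    | grade0 r =>
      intro b hb
      rw [AlgHom.commutes, ← Algebra.commutes, ← Algebra.smul_def]
      exact S.smul_mem _ hb
    | grade1 k => intro b hb; exact h k b hb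
    | mul x y hx hy => intro b hb; rw [map_mul, ← mul_assoc]; exact hy _ (hx _ hb)
    | add x y hx hy => intro b hb; rw [map_add, mul_add]; exact S.add_mem (hx _ hb) (hy _ hb)
  simpa using key 1 h1

lemma exists_core (A : I → I → ℤ) :
    ∃ Ad : (I → ℤ) → Um A →ₐ[KK] Um A, Core A (fgen A) Ad := by
  have h : ∀ w : I → ℤ, ∃ Φ : Um A →ₐ[KK] Um A, ∀ i, Φ (fgen A i) = qZ (-w i) • fgen A i := by
    intro w
    refine um_lift A (fun i => qZ (-w i) • fgen A i) ?_
    intro i j hij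
    rw [serreElt_smul, fgen_serre A i j hij, smul_zero]
  choose Ad hAd using h
  exact ⟨Ad, fgen_serre A, um_hl A, um_hr A, hAd⟩

lemma isAd_eq {A : I → I → ℤ} {Ad : (I → ℤ) → Um A →ₐ[KK] Um A} (H : Core A (fgen A) Ad)
    (w : I → ℤ) (T : Module.End KK (Um A)) (hT : IsAd A w T) (a : Um A) : T a = Ad w a := by
  have hmon : ∀ L : List I, Ad w (L.map (fgen A)).prod =
      qZ (-(L.map w).sum) • (L.map (fgen A)).prod := by
    intro L
    induction L with
    | nil => simp [qZ_zero]
    | cons i L ih =>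
      rw [List.map_cons, List.prod_cons, H.ad_mul, ih, mul_smul_comm, smul_smul, ← qZ_add,
        List.map_cons, List.sum_cons]
      congr 2
      ring
  have hTmon : ∀ L : List I, T (L.map (fgen A)).prod = Ad w (L.map (fgen A)).prod := by
    intro L
    rw [hmon]
    have hc : ∀ i, L.count i = (Multiset.toFinsupp (L : Multiset I)) i := by
      intro i; simp
    rw [hT (Multiset.toFinsupp (L : Multiset I)) _ (Submodule.subset_span ⟨L, hc, rfl⟩)]
    congr 3
    rw [Finset.sum_list_map_count, Multiset.toFinsupp_support]
    refine Finset.sum_congr rfl fun i _ => ?_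
    rw [← hc, nsmul_eq_mul]
  have hspan : ∀ a : Um A, a ∈ Submodule.span KK
      (Set.range fun L : List I => (L.map (fgen A)).prod) := by
    intro a
    refine um_hl A _ ?_ ?_ a
    · exact Submodule.subset_span ⟨[], by simp⟩
    intro k a ha
    induction ha using Submodule.span_induction with
    | mem x hx =>
      obtain ⟨L, rfl⟩ := hx
      exact Submodule.subset_span ⟨k :: L, by simp⟩
    | zero => rw [mul_zero]; exact Submodule.zero_mem _
    | add x y _ _ hx hy => rw [mul_add]; exact Submodule.add_mem _ hx hy
    | smul c x _ hx => rw [mul_smul_comm]; exact Submodule.smul_mem _ _ hx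
  have := hspan a
  induction this using Submodule.span_induction with
  | mem x hx =>
    obtain ⟨L, rfl⟩ := hx
    exact hTmon L
  | zero => rw [map_zero, map_zero]
  | add x y _ _ hx hy => rw [map_add, map_add, hx, hy]
  | smul c x _ hx => rw [map_smul, map_smul, hx]

section Psi
variable {U V : Type} [Ring U] [Algebra KK U] [AddCommGroup V] [Module KK V]

lemma psi_exists (A : I → I → ℤ) (θ : I → I) (f : I → U)
    (ρ' : Bth A θ →ₐ[KK] Module.End KK U) (ρ'' : Bth A θ →ₐ[KK] Module.End KK V) (v0 : V)
    (c : I → KK)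
    (hl : ∀ S : Submodule KK U, 1 ∈ S → (∀ k a, a ∈ S → f k * a ∈ S) → ∀ a, a ∈ S)
    (hF : ∀ i a, ρ' (Fg A θ i) a = f i * a)
    (hE1 : ∀ i, ρ' (Eg A θ i) 1 = 0) (hE2 : ∀ i, ρ'' (Eg A θ i) v0 = 0)
    (hT1 : ∀ i, ρ' (Tg A θ i) 1 = c i • 1) (hT2 : ∀ i, ρ'' (Tg A θ i) v0 = c i • v0)
    (Φ : U →ₐ[KK] Module.End KK V) (hΦ : ∀ i, Φ (f i) = ρ'' (Fg A θ i)) :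
    ∃! ψ : U →ₗ[KK] V, ψ 1 = v0 ∧ ∀ (x : Bth A θ) (a : U), ψ (ρ' x a) = ρ'' x (ψ a) := by
  let ψ : U →ₗ[KK] V := LinearMap.applyₗ v0 ∘ₗ Φ.toLinearMap
  have hψ : ∀ a, ψ a = Φ a v0 := fun a => rfl
  have hψ1 : ψ 1 = v0 := by rw [hψ, map_one]; rfl
  have hψF : ∀ i a, ψ (ρ' (Fg A θ i) a) = ρ'' (Fg A θ i) (ψ a) := by
    intro i a
    rw [hF, hψ, hψ, map_mul, hΦ]; rfl
  clear_value ψ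
  have rTF : ∀ i j, Tg A θ i * Fg A θ j = qZ (-(A i j + A (θ i) j)) • (Fg A θ j * Tg A θ i) := by
    intro i j
    have := RingQuot.mkAlgHom_rel KK (BRel.TF (A := A) (θ := θ) i j)
    rw [map_mul, map_smul, map_mul] at this
    exact this
  have rEF : ∀ i j, Eg A θ i * Fg A θ j = qZ (-(A i j)) • (Fg A θ j * Eg A θ i) +
      dl i j • 1 + dl (θ i) j • Tg A θ i := by
    intro i j
    have := RingQuot.mkAlgHom_rel KK (BRel.EF (A := A) (θ := θ) i j)
    rw [map_mul, map_add, map_add, map_smul, map_mul] at this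
    refine this.trans ?_
    congr 1
    · congr 1
      unfold dl; split_ifs <;> simp
    · unfold dl; split_ifs
      · rw [one_smul]; rfl
      · simp
  have rTr : ∀ i, Tg A θ i * Tig A θ i = 1 := by
    intro i
    have := RingQuot.mkAlgHom_rel KK (BRel.T_inv_right (A := A) (θ := θ) i)
    rw [map_mul, map_one] at this
    exact this
  have rTl : ∀ i, Tig A θ i * Tg A θ i = 1 := by
    intro i
    have := RingQuot.mkAlgHom_rel KK (BRel.T_inv_left (A := A) (θ := θ) i)
    rw [map_mul, map_one] at this
    exact this
  have hψT : ∀ i a, ψ (ρ' (Tg A θ i) a) = ρ'' (Tg A θ i) (ψ a) := by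
    intro i
    refine hl (LinearMap.eqLocus (ψ ∘ₗ ρ' (Tg A θ i)) (ρ'' (Tg A θ i) ∘ₗ ψ)) ?_ ?_
    · rw [LinearMap.mem_eqLocus, LinearMap.comp_apply, LinearMap.comp_apply, hT1, map_smul, hψ1,
        hT2]
    · intro k a ha
      rw [LinearMap.mem_eqLocus, LinearMap.comp_apply, LinearMap.comp_apply] at ha ⊢
      rw [← hF, hψF, ← Module.End.mul_apply, ← Module.End.mul_apply, ← map_mul, ← map_mul, rTF,
        map_smul, map_smul, LinearMap.smul_apply, LinearMap.smul_apply, map_mul, map_mul,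
        Module.End.mul_apply, Module.End.mul_apply, map_smul, hψF, ha]
  have hψE : ∀ i a, ψ (ρ' (Eg A θ i) a) = ρ'' (Eg A θ i) (ψ a) := by
    intro i
    refine hl (LinearMap.eqLocus (ψ ∘ₗ ρ' (Eg A θ i)) (ρ'' (Eg A θ i) ∘ₗ ψ)) ?_ ?_
    · rw [LinearMap.mem_eqLocus, LinearMap.comp_apply, LinearMap.comp_apply, hE1, map_zero, hψ1,
        hE2]
    · intro k a ha
      rw [LinearMap.mem_eqLocus, LinearMap.comp_apply, LinearMap.comp_apply] at ha ⊢
      rw [← hF, hψF, ← Module.End.mul_apply, ← Module.End.mul_apply, ← map_mul, ← map_mul, rEF]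
      simp only [map_add, map_smul, map_one, map_mul, LinearMap.add_apply, LinearMap.smul_apply,
        Module.End.mul_apply, Module.End.one_apply, hψF, hψT, ha]
  have hψTi : ∀ i a, ψ (ρ' (Tig A θ i) a) = ρ'' (Tig A θ i) (ψ a) := by
    intro i a
    have e1 : ρ'' (Tig A θ i) (ρ'' (Tg A θ i) (ψ (ρ' (Tig A θ i) a))) =
        ψ (ρ' (Tig A θ i) a) := by
      rw [← Module.End.mul_apply, ← map_mul, rTl, map_one, Module.End.one_apply]
    rw [← e1, ← hψT, ← Module.End.mul_apply (ρ' _), ← map_mul, rTr, map_one, Module.End.one_apply]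
  have hall : ∀ (x : Bth A θ) (a : U), ψ (ρ' x a) = ρ'' x (ψ a) := by
    intro x
    obtain ⟨x, rfl⟩ := RingQuot.mkAlgHom_surjective KK (BRel A θ) x
    induction x using FreeAlgebra.induction with
    | grade0 r =>
      intro a
      rw [AlgHom.commutes, AlgHom.commutes, AlgHom.commutes, Module.algebraMap_end_apply,
        Module.algebraMap_end_apply, map_smul]
    | grade1 g =>
      cases g with
      | E i => exact hψE i
      | F i => exact hψF i
      | T i => exact hψT i
      | Ti i => exact hψTi i
    | mul x y hx hy =>
      intro a
      rw [map_mul, map_mul, map_mul, Module.End.mul_apply, Module.End.mul_apply, hx, hy]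
    | add x y hx hy =>
      intro a
      rw [map_add, map_add, map_add, LinearMap.add_apply, LinearMap.add_apply, map_add, hx, hy]
  refine ⟨ψ, ⟨hψ1, hall⟩, ?_⟩
  rintro ψ' ⟨h1, h2⟩
  ext a
  refine hl (LinearMap.eqLocus ψ' ψ) (h1.trans hψ1.symm) ?_ a
  intro k a ha
  rw [LinearMap.mem_eqLocus] at ha ⊢
  rw [← hF, h2, hall, ha]

end Psi

end Build

section Reps
variable {U : Type} [Ring U] [Algebra KK U] {A : I → I → ℤ} {f : I → U}
  {Ad : (I → ℤ) → U →ₐ[KK] U} {E Es : I → Module.End KK U}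

/-- weight of `t_i t_{θ i}` -/
def wt (A : I → I → ℤ) (θ : I → I) (i : I) : I → ℤ := fun j => A i j + A (θ i) j

lemma wt_theta {θ : I → I} (hθ : IsTheta A θ) (i : I) : wt A θ (θ i) = wt A θ i := by
  funext j; simp only [wt, hθ.1]; ring

lemma wt_theta' {θ : I → I} (hθ : IsTheta A θ) (i j : I) : wt A θ i (θ j) = wt A θ i j := by
  have := hθ.2 (θ i) j
  rw [hθ.1] at this
  simp only [wt, hθ.2, this]; ring

def bigT (Ad : (I → ℤ) → U →ₐ[KK] U) (A : I → I → ℤ) (θ : I → I) (lam : I → ℤ) (i : I) :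
    Module.End KK U := qZ (lam i) • (Ad (wt A θ i)).toLinearMap

def bigTi (Ad : (I → ℤ) → U →ₐ[KK] U) (A : I → I → ℤ) (θ : I → I) (lam : I → ℤ) (i : I) :
    Module.End KK U := qZ (-lam i) • (Ad (-wt A θ i)).toLinearMap

lemma bigT_apply (θ : I → I) (lam : I → ℤ) (i : I) (a : U) :
    bigT Ad A θ lam i a = qZ (lam i) • Ad (wt A θ i) a := rfl

lemma bigTi_apply (θ : I → I) (lam : I → ℤ) (i : I) (a : U) :
    bigTi Ad A θ lam i a = qZ (-lam i) • Ad (-wt A θ i) a := rfl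

lemma opT_apply (lam : I → ℤ) (i : I) (a : U) :
    opT (A := A) Ad lam i a = qZ (lam i) • Ad (A i) a := rfl

lemma T_r (H : Core A f Ad) (θ : I → I) (lam : I → ℤ) (i : I) :
    bigT Ad A θ lam i * bigTi Ad A θ lam i = 1 := by
  ext a
  rw [Module.End.mul_apply, bigT_apply, bigTi_apply, map_smul, H.ad_ad, smul_smul, ← qZ_add,
    add_neg_cancel, add_neg_cancel, H.ad_zero, qZ_zero, one_smul]
  rfl

lemma T_l (H : Core A f Ad) (θ : I → I) (lam : I → ℤ) (i : I) :
    bigTi Ad A θ lam i * bigT Ad A θ lam i = 1 := by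
  ext a
  rw [Module.End.mul_apply, bigT_apply, bigTi_apply, map_smul, H.ad_ad, smul_smul, ← qZ_add,
    neg_add_cancel, neg_add_cancel, H.ad_zero, qZ_zero, one_smul]
  rfl

lemma T_c (H : Core A f Ad) (θ : I → I) (lam : I → ℤ) (i j : I) :
    bigT Ad A θ lam i * bigT Ad A θ lam j = bigT Ad A θ lam j * bigT Ad A θ lam i := by
  ext a
  simp only [Module.End.mul_apply, bigT_apply, map_smul, H.ad_ad]
  rw [smul_comm, add_comm (wt A θ i)]

lemma rep1 (hA : IsCartan A) {θ : I → I} (hθ : IsTheta A θ) (H : Core A f Ad) (hE : EP A f E)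
    (hEs : EPs A f Es) (lam : I → ℤ) (hlam : ∀ i, lam (θ i) = lam i) :
    ∃ ρ : Bth A θ →ₐ[KK] Module.End KK U,
      (∀ i, ρ (Tg A θ i) = bigT Ad A θ lam i) ∧
      (∀ i, ρ (Eg A θ i) = E i + opT (A := A) Ad lam i * Es (θ i)) ∧
      (∀ i, ρ (Fg A θ i) = LinearMap.mulLeft KK (f i)) := by
  refine buildRep A θ (bigT Ad A θ lam) (bigTi Ad A θ lam)
    (fun i => E i + opT (A := A) Ad lam i * Es (θ i))
    (fun i => LinearMap.mulLeft KK (f i)) (T_r H θ lam) (T_l H θ lam) (T_c H θ lam) ?_ ?_ ?_ ?_ ?_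
    (serre_E1 hA hθ H hE hEs lam) ?_
  · intro i; simp only [bigT, hlam, wt_theta hθ]
  · intro i; simp only [bigTi, hlam, wt_theta hθ]
  · intro i j
    ext a
    have h := Ad_Es H hEs (wt A θ i) (θ j) a
    rw [wt_theta' hθ] at h
    have h2 : Ad (wt A θ i) (Ad (A j) (Es (θ j) a)) =
        qZ (wt A θ i j) • Ad (A j) (Es (θ j) (Ad (wt A θ i) a)) := by
      rw [H.ad_ad, add_comm, ← H.ad_ad, h, map_smul]
    have h3 : qZ (A i j + A (θ i) j) = qZ (wt A θ i j) := rfl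
    rw [h3]
    simp only [Module.End.mul_apply, LinearMap.smul_apply, LinearMap.add_apply, bigT_apply,
      opT_apply, map_add, map_smul, Ad_E H hE, h2, smul_add, smul_smul, mul_comm, mul_left_comm]
  · intro i j
    ext a
    have h3 : qZ (-(A i j + A (θ i) j)) = qZ (-wt A θ i j) := rfl
    rw [h3]
    simp only [Module.End.mul_apply, LinearMap.smul_apply, bigT_apply, LinearMap.mulLeft_apply,
      H.ad_mul, mul_smul_comm, smul_smul, mul_comm]
  · intro i j
    ext a
    have h2 : Ad (A i) (Ad (A (θ i)) a) = Ad (wt A θ i) a := by rw [H.ad_ad]; rfl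
    simp only [Module.End.mul_apply, LinearMap.smul_apply, LinearMap.add_apply, bigT_apply,
      opT_apply, LinearMap.mulLeft_apply, Module.End.one_apply, hE.mul, Es_left H hEs, map_add,
      map_smul, H.ad_mul, h2, smul_add, mul_add, mul_smul_comm, smul_smul]
    simp only [mul_comm]
    abel
  · intro i j h
    rw [serreElt_mulLeft, H.serre i j h]
    ext; simp

lemma rep2 (hA : IsCartan A) {θ : I → I} (hθ : IsTheta A θ) (H : Core A f Ad) (hE : EP A f E)
    (lam : I → ℤ) (hlam : ∀ i, lam (θ i) = lam i) :
    ∃ ρ : Bth A θ →ₐ[KK] Module.End KK U,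
      (∀ i, ρ (Tg A θ i) = bigT Ad A θ lam i) ∧
      (∀ i, ρ (Eg A θ i) = E i) ∧
      (∀ i a, ρ (Fg A θ i) a = f i * a + qZ (lam i) • (Ad (A i) a * f (θ i))) := by
  have hF : ∀ i a, (LinearMap.mulLeft KK (f i) + opT (A := A) Ad lam i *
      (qZ (A i (θ i)) • LinearMap.mulRight KK (f (θ i)))) a =
      f i * a + qZ (lam i) • (Ad (A i) a * f (θ i)) := by
    intro i a
    simp only [LinearMap.add_apply, Module.End.mul_apply, LinearMap.smul_apply, opT_apply,
      LinearMap.mulLeft_apply, LinearMap.mulRight_apply, map_smul, H.ad_mul', smul_smul]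
    have : qZ (A i (θ i)) * qZ (-A i (θ i)) = 1 := by rw [← qZ_add]; simp [qZ_zero]
    rw [mul_left_comm, this, mul_one]
  obtain ⟨ρ, h1, h2, h3⟩ := buildRep A θ (bigT Ad A θ lam) (bigTi Ad A θ lam) E
    (fun i => LinearMap.mulLeft KK (f i) + opT (A := A) Ad lam i *
      (qZ (A i (θ i)) • LinearMap.mulRight KK (f (θ i))))
    (T_r H θ lam) (T_l H θ lam) (T_c H θ lam)
    (by intro i; simp only [bigT, hlam, wt_theta hθ])
    (by intro i; simp only [bigTi, hlam, wt_theta hθ])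
    (by
      intro i j
      ext a
      have h3 : qZ (A i j + A (θ i) j) = qZ (wt A θ i j) := rfl
      rw [h3]
      simp only [Module.End.mul_apply, LinearMap.smul_apply, bigT_apply,
        map_smul, Ad_E H hE, smul_smul, mul_comm])
    (by
      intro i j
      ext a
      have h3 : qZ (-(A i j + A (θ i) j)) = qZ (-wt A θ i j) := rfl
      have h4 : Ad (wt A θ i) (Ad (A j) a) = Ad (A j) (Ad (wt A θ i) a) := by
        rw [H.ad_ad, add_comm, ← H.ad_ad]
      rw [h3]
      simp only [Module.End.mul_apply, LinearMap.smul_apply, hF]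
      simp only [bigT_apply, map_add, map_smul, H.ad_mul, H.ad_mul', wt_theta' hθ, h4, smul_add,
        smul_mul_assoc, mul_smul_comm, smul_smul, mul_assoc, mul_comm, mul_left_comm])
    (by
      intro i j
      ext a
      have h5 : dl i (θ j) * qZ (lam j) = dl (θ i) j * qZ (lam i) := by
        unfold dl
        by_cases hh : θ i = j
        · subst hh; simp [hθ.1, hlam]
        · have : i ≠ θ j := fun h => hh (by rw [h, hθ.1])
          simp [hh, this]
      have h6 : dl i (θ j) • Ad (A i) (Ad (A j) a) = dl i (θ j) • Ad (wt A θ i) a := by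
        unfold dl
        split_ifs with hh
        · rw [H.ad_ad]
          have : wt A θ i = A i + A j := by
            funext k; rw [hh]; simp [wt, hθ.1]
          rw [this]
        · simp
      have h7 : qZ (-A i j) * qZ (A j i) = 1 := by
        rw [← qZ_add, hA.1 i j]; simp [qZ_zero]
      have h8 : E i (Ad (A j) a) = qZ (-A i j) • Ad (A j) (E i a) := by
        rw [Ad_E H hE, smul_smul, h7, one_smul]
      simp only [Module.End.mul_apply, LinearMap.smul_apply, LinearMap.add_apply, hF]
      simp only [bigT_apply, Module.End.one_apply, map_add, map_smul, hE.mul, E_right H hE, h6,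
        h8, smul_add, smul_mul_assoc, smul_smul]
      rw [← h5]
      simp only [mul_comm]
      abel)
    (E_serre hA H hE) (serre_F2 hA hθ H lam)
  exact ⟨ρ, h1, h2, fun i a => by rw [h3]; exact hF i a⟩

end Reps

end Aux

set_option synthInstance.maxHeartbeats 1000000 in
set_option maxHeartbeats 1000000 in
theorem stmt8 (A : I → I → ℤ) (θ : I → I) (hA : IsCartan A) (hθ : IsTheta A θ)
    (lam : I → ℤ) (hlam : IsDomWt A θ lam)
    (E : I → Module.End KK (Um A)) (hE : EprimRel A E)
    (Es : I → Module.End KK (Um A)) (hEs : EstarRel A Es)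
    (Adt : I → Module.End KK (Um A)) (hAdt : ∀ i, IsAd A (A i) (Adt i))
    (Adtt : I → Module.End KK (Um A))
    (hAdtt : ∀ i, IsAd A (fun j => A i j + A (θ i) j) (Adtt i)) :
    -- the `B_θ(g)`-module structure on `U_q^-(g) φ'_λ`
    (∃ ρ' : Bth A θ →ₐ[KK] Module.End KK (Um A),
      (∀ i (a : Um A), ρ' (Tg A θ i) a = qZ (lam i) • Adtt i a) ∧
      (∀ i (a : Um A), ρ' (Eg A θ i) a = E i a + qZ (lam i) • Adt i (Es (θ i) a)) ∧
      (∀ i (a : Um A), ρ' (Fg A θ i) a = fgen A i * a)) ∧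
    -- the `B_θ(g)`-module structure on `U_q^-(g) φ''_λ`
    (∃ ρ'' : Bth A θ →ₐ[KK] Module.End KK (Um A),
      (∀ i (a : Um A), ρ'' (Tg A θ i) a = qZ (lam i) • Adtt i a) ∧
      (∀ i (a : Um A), ρ'' (Eg A θ i) a = E i a) ∧
      (∀ i (a : Um A), ρ'' (Fg A θ i) a
          = fgen A i * a + qZ (lam i) • (Adt i a * fgen A (θ i)))) ∧
    -- the unique `B_θ(g)`-linear map `ψ : U_q^-(g)φ'_λ → U_q^-(g)φ''_λ`, `φ'_λ ↦ φ''_λ`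
    (∀ (ρ' ρ'' : Bth A θ →ₐ[KK] Module.End KK (Um A)),
      (∀ i (a : Um A), ρ' (Tg A θ i) a = qZ (lam i) • Adtt i a) →
      (∀ i (a : Um A), ρ' (Eg A θ i) a = E i a + qZ (lam i) • Adt i (Es (θ i) a)) →
      (∀ i (a : Um A), ρ' (Fg A θ i) a = fgen A i * a) →
      (∀ i (a : Um A), ρ'' (Tg A θ i) a = qZ (lam i) • Adtt i a) →
      (∀ i (a : Um A), ρ'' (Eg A θ i) a = E i a) →
      (∀ i (a : Um A), ρ'' (Fg A θ i) a
          = fgen A i * a + qZ (lam i) • (Adt i a * fgen A (θ i))) →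
      ∃! ψ : Um A →ₗ[KK] Um A,
        ψ 1 = 1 ∧ ∀ (x : Bth A θ) (a : Um A), ψ (ρ' x a) = ρ'' x (ψ a)) := by
    classical
  obtain ⟨Ad, H⟩ := Aux.exists_core A
  have eA : ∀ i a, Adt i a = Ad (A i) a := fun i a => Aux.isAd_eq H _ _ (hAdt i) a
  have eT : ∀ i a, Adtt i a = Ad (Aux.wt A θ i) a := fun i a => Aux.isAd_eq H _ _ (hAdtt i) a
  have hE' : Aux.EP A (fgen A) E := by
    refine ⟨hE.1, fun i j a => ?_⟩
    rw [hE.2 i j a, Aux.dl]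
    split_ifs
    · rw [one_smul]
    · rw [zero_smul]
  have hEs' : Aux.EPs A (fgen A) Es := by
    refine ⟨hEs.1, fun i j a => ?_⟩
    rw [hEs.2 i j a, Aux.dl]
    split_ifs
    · rw [one_smul]
    · rw [zero_smul]
  refine ⟨?_, ?_, ?_⟩
  · obtain ⟨ρ, h1, h2, h3⟩ := Aux.rep1 hA hθ H hE' hEs' lam hlam.2.2
    refine ⟨ρ, fun i a => ?_, fun i a => ?_, fun i a => ?_⟩
    · rw [h1, eT]; rfl
    · rw [h2, eA]; rfl
    · rw [h3]; rfl
  · obtain ⟨ρ, h1, h2, h3⟩ := Aux.rep2 hA hθ H hE' lam hlam.2.2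
    refine ⟨ρ, fun i a => ?_, fun i a => ?_, fun i a => ?_⟩
    · rw [h1, eT]; rfl
    · rw [h2]
    · rw [h3, eA]
  · intro ρ' ρ'' hT1 hE1 hF1 hT2 hE2 hF2
    have hs : ∀ i j, i ≠ j → serreElt A (fun k => ρ'' (Fg A θ k)) i j = 0 := by
      intro i j h
      have hrel := RingQuot.mkAlgHom_rel KK (BRel.Fserre (A := A) (θ := θ) i j h)
      have h2 := Aux.serreElt_map (R := FreeAlgebra KK (BGen I)) (R' := Module.End KK (Um A)) A
        (ρ''.comp (RingQuot.mkAlgHom KK (BRel A θ))) bF i j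
      refine h2.symm.trans ?_
      rw [AlgHom.comp_apply, hrel, map_zero, map_zero]
    obtain ⟨Φ, hΦ⟩ := Aux.um_lift A (fun k => ρ'' (Fg A θ k)) hs
    refine Aux.psi_exists A θ (fgen A) ρ' ρ'' 1 (fun i => qZ (lam i)) H.hl hF1 ?_ ?_ ?_ ?_ Φ hΦ
    · intro i
      rw [hE1, hE.1, hEs.1, map_zero, smul_zero, add_zero]
    · intro i
      rw [hE2, hE.1]
    · intro i
      rw [hT1, eT, map_one]
    · intro i
      rw [hT2, eT, map_one]
end
end
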